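/- arXiv:1805.02604 — 4 statements merged into one kernel-verified Lean document; each statement's English description precedes it below -/
import Mathlib

section
/- Let Ω ⊂ ℝ^N be open and bounded, let (ε_k) be a sequence of positive numbers with ε_k → 0, and let u_k : ℝ^N → ℝ be of class C¹. Set p_k(x) := |u_k(x)² − 1| ∇u_k(x). Let λ be a finite Borel measure on Ω and ρ : Ω → ℝ^N Borel measurable with |ρ(x)| = 1 for λ-a.e. x. Assume: (i) for every continuous compactly supported φ : Ω → ℝ^N, ∫_Ω φ·p_k dx → ∫_Ω φ·ρ dλ; (ii) ∫_Ω |p_k| dx → λ(Ω); and (iii) ∫_Ω | ε_k|∇u_k|² − |p_k| | dx → 0. Then for every bounded continuous φ : Ω → ℝ and all indices i, j ∈ {1, …, N}, ∫_Ω ε_k ∂u_k/∂x_i ∂u_k/∂x_j φ dx → ∫_Ω ρ_i ρ_j φ dλ as k → ∞. -/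
open Filter MeasureTheory Topology
open scoped RealInnerProductSpace

namespace PaperAC

/-- The partial derivative `∂f/∂x_j` of a scalar function on `ℝ^N`. -/
noncomputable def pdv {N : ℕ} (f : (Fin N → ℝ) → ℝ) (j : Fin N) (x : Fin N → ℝ) : ℝ :=
  fderiv ℝ f x (Pi.single j 1)

/-- The advection field `(η·∇)η`, with components `((η·∇)η)^i = ∑_j η^j ∂η^i/∂x_j`. -/
noncomputable def advf {N : ℕ} (η : (Fin N → ℝ) → (Fin N → ℝ)) (x : Fin N → ℝ) :
    Fin N → ℝ :=
  fun i => ∑ j, η x j * pdv (fun z => η z i) j x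

/-- The gradient `∇u` of a scalar function on `ℝ^N`. -/
noncomputable def grad {N : ℕ} (u : (Fin N → ℝ) → ℝ) (x : Fin N → ℝ) : Fin N → ℝ :=
  fun i => pdv u i x

/-- `X₀ := (D²u·η, η) + (∇u, 2(η·∇)η − ζ)`. -/
noncomputable def X0 {N : ℕ} (u : (Fin N → ℝ) → ℝ) (η ζ : (Fin N → ℝ) → (Fin N → ℝ))
    (y : Fin N → ℝ) : ℝ :=
  (∑ i, ∑ j, pdv (pdv u i) j y * η y i * η y j)
    + ∑ i, pdv u i y * (2 * advf η y i - ζ y i)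

/-- `−∇u·η`. -/
noncomputable def nGradDot {N : ℕ} (u : (Fin N → ℝ) → ℝ) (η : (Fin N → ℝ) → (Fin N → ℝ))
    (x : Fin N → ℝ) : ℝ :=
  -(∑ i, pdv u i x * η x i)

/-- `F_z`, the partial derivative of `F = F(z,p)` in the scalar variable. -/
noncomputable def Fz {N : ℕ} (F : ℝ × (Fin N → ℝ) → ℝ) (z : ℝ) (p : Fin N → ℝ) : ℝ :=
  fderiv ℝ F (z, p) (1, 0)

/-- `F_{p_i}`. -/
noncomputable def Fp {N : ℕ} (F : ℝ × (Fin N → ℝ) → ℝ) (i : Fin N) (z : ℝ) (p : Fin N → ℝ) :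
    ℝ :=
  fderiv ℝ F (z, p) (0, Pi.single i 1)

/-- `F_{zz}`. -/
noncomputable def Fzz {N : ℕ} (F : ℝ × (Fin N → ℝ) → ℝ) (z : ℝ) (p : Fin N → ℝ) : ℝ :=
  fderiv ℝ (fun q => fderiv ℝ F q (1, 0)) (z, p) (1, 0)

/-- `F_{z p_i}`. -/
noncomputable def Fzp {N : ℕ} (F : ℝ × (Fin N → ℝ) → ℝ) (i : Fin N) (z : ℝ) (p : Fin N → ℝ) :
    ℝ :=
  fderiv ℝ (fun q => fderiv ℝ F q ((0 : ℝ), Pi.single i 1)) (z, p) (1, 0)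

/-- `F_{p_i p_j}`. -/
noncomputable def Fpp {N : ℕ} (F : ℝ × (Fin N → ℝ) → ℝ) (i j : Fin N) (z : ℝ)
    (p : Fin N → ℝ) : ℝ :=
  fderiv ℝ (fun q => fderiv ℝ F q ((0 : ℝ), Pi.single j 1)) (z, p) ((0 : ℝ), Pi.single i 1)

/-- `𝔄₁(t) = A(u ∘ Φ_t⁻¹) = ∫_Ω F(u_t, ∇u_t)`, the inner deformation of the functional
`A(w) := ∫_Ω F(w, ∇w)`. -/
noncomputable def innerA {N : ℕ} (Ω : Set (Fin N → ℝ)) (F : ℝ × (Fin N → ℝ) → ℝ)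
    (u : (Fin N → ℝ) → ℝ) (Φ : ℝ → (Fin N → ℝ) → (Fin N → ℝ)) (t : ℝ) : ℝ :=
  ∫ y in Ω, F (u (Function.invFun (Φ t) y),
      grad (fun z => u (Function.invFun (Φ t) z)) y)

/-- `t ↦ A(u + tφ) = ∫_Ω F(u + tφ, ∇u + t∇φ)`, the outer deformation of the functional
`A(w) := ∫_Ω F(w, ∇w)`. -/
noncomputable def gateauxA {N : ℕ} (Ω : Set (Fin N → ℝ)) (F : ℝ × (Fin N → ℝ) → ℝ)
    (u φ : (Fin N → ℝ) → ℝ) (t : ℝ) : ℝ :=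
  ∫ x in Ω, F (u x + t * φ x, fun i => pdv u i x + t * pdv φ i x)

/-- The matrix `M_t(x)` with entries `δ_{ij} + t ∂η^i/∂x_j + (t²/2) ∂W^i/∂x_j`. -/
noncomputable def defMat {N : ℕ} (η W : (Fin N → ℝ) → (Fin N → ℝ)) (t : ℝ)
    (x : Fin N → ℝ) : Matrix (Fin N) (Fin N) ℝ :=
  Matrix.of fun i j =>
    (if i = j then (1 : ℝ) else 0) + t * pdv (fun z => η z i) j x
      + (t ^ 2 / 2) * pdv (fun z => W z i) j x

/-- `Φ(a) := ∫_0^a |s² − 1| ds`. -/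
noncomputable def PhiAC (a : ℝ) : ℝ := ∫ s in (0 : ℝ)..a, |s ^ 2 - 1|

/-- All partial derivatives (= iterated Fréchet derivatives) of `f` up to order `n` are
bounded; the case `i = 0` says `f` itself is bounded. -/
def BddUpTo {N : ℕ} {E : Type*} [NormedAddCommGroup E] [NormedSpace ℝ E]
    (n : ℕ) (f : (Fin N → ℝ) → E) : Prop :=
  ∀ i : ℕ, i ≤ n → ∃ C : ℝ, ∀ x, ‖iteratedFDeriv ℝ i f x‖ ≤ C

/-!
The proof is Reshetnyak's continuity argument. Let `H` be continuous and positively homogeneous of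
degree one, and let `g` be a continuous field with `|g| ≤ 1`, compactly supported in `Ω`. The error
in replacing `H p` by `⟪g, p⟫ * H g` is at most a small multiple of `|p|` plus a constant times
`|p| - ⟪g, p⟫`. Both `⟪g, p⟫ * H g * φ` and this bound are integrands whose limits are given by
the convergence of the measures and of their masses, and in the limit the bound is small when `g`
is chosen close to `ρ` in `L¹(λ)`. For `H p = p_i p_j / |p|` and `p = a ∇u`, the integrand `H p`
differs from `ε ∂_i u ∂_j u` by at most a multiple of the discrepancy `|ε |∇u|² - |p||`.
-/

/-- Positive homogeneity of degree one, the condition under which `∫ H (dν/d|ν|) d|ν|` is defined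
for a vector measure `ν` and can be computed as `∫ H (dν/dμ) dμ` from any dominating `μ`. -/
def IsPosHomogeneous {E : Type*} [SMul ℝ E] (H : E → ℝ) : Prop :=
  ∀ t : ℝ, 0 ≤ t → ∀ v, H (t • v) = t * H v

section Homogeneous

variable {E : Type*} [NormedAddCommGroup E]

lemma exists_abs_sub_le_add_mul_norm_sub_sq [ProperSpace E] {H : E → ℝ} (hH : Continuous H)
    {η : ℝ} (hη : 0 < η) :
    ∃ K, 0 ≤ K ∧ ∀ v w, ‖v‖ ≤ 1 → ‖w‖ ≤ 1 → |H v - H w| ≤ η + K * ‖v - w‖ ^ 2 := by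
  have hball : IsCompact (Metric.closedBall (0 : E) 1) := isCompact_closedBall 0 1
  obtain ⟨B, hB⟩ := hball.exists_bound_of_continuousOn hH.continuousOn
  obtain ⟨d, hd, hHd⟩ := Metric.uniformContinuousOn_iff_le.1
    (hball.uniformContinuousOn_of_continuous hH.continuousOn) η hη
  simp only [mem_closedBall_zero_iff, Real.norm_eq_abs, Real.dist_eq] at hB hHd
  have hB0 : 0 ≤ B := (abs_nonneg _).trans (hB 0 (by simp))
  refine ⟨2 * B / d ^ 2, by positivity, fun v w hv hw => ?_⟩
  rcases le_total ‖v - w‖ d with hnear | hfar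
  · have := hHd v hv w hw (by rwa [dist_eq_norm])
    have : 0 ≤ 2 * B / d ^ 2 * ‖v - w‖ ^ 2 := by positivity
    linarith
  · calc |H v - H w| ≤ |H v| + |H w| := abs_sub _ _
      _ ≤ 2 * B / d ^ 2 * d ^ 2 := by
        rw [div_mul_cancel₀ _ (by positivity)]; linarith [hB v hv, hB w hw]
      _ ≤ 2 * B / d ^ 2 * ‖v - w‖ ^ 2 := by gcongr
      _ ≤ η + 2 * B / d ^ 2 * ‖v - w‖ ^ 2 := by linarith

variable [InnerProductSpace ℝ E]

lemma norm_sub_sq_le_two_mul_one_sub_inner {v w : E} (hv : ‖v‖ ≤ 1) (hw : ‖w‖ ≤ 1) :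
    ‖v - w‖ ^ 2 ≤ 2 * (1 - ⟪w, v⟫) := by
  rw [norm_sub_sq_real, real_inner_comm]
  nlinarith [norm_nonneg v, norm_nonneg w]

/-- On unit vectors this is the continuity of `H`, as `1 - ⟪g, v⟫` controls `‖v - g‖ ^ 2`. The
point is that, apart from the small multiple of `‖v‖`, the right-hand side is linear in `v` and
`‖v‖`, hence passes to the limit along weak convergence with convergence of masses. -/
lemma IsPosHomogeneous.exists_abs_sub_inner_mul_le [ProperSpace E] {H : E → ℝ}
    (hhom : IsPosHomogeneous H) (hH : Continuous H) {η : ℝ} (hη : 0 < η) :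
    ∃ K, 0 ≤ K ∧ ∀ v g, ‖g‖ ≤ 1 → |H v - ⟪g, v⟫ * H g| ≤ η * ‖v‖ + K * (‖v‖ - ⟪g, v⟫) := by
  obtain ⟨K, hK, hHK⟩ := exists_abs_sub_le_add_mul_norm_sub_sq hH hη
  obtain ⟨B, hB⟩ := (isCompact_closedBall (0 : E) 1).exists_bound_of_continuousOn hH.continuousOn
  simp only [mem_closedBall_zero_iff, Real.norm_eq_abs] at hB
  have hB0 : 0 ≤ B := (abs_nonneg _).trans (hB 0 (by simp))
  have unit_bound : ∀ v g, ‖v‖ = 1 → ‖g‖ ≤ 1 →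
      |H v - ⟪g, v⟫ * H g| ≤ η + (2 * K + B) * (1 - ⟪g, v⟫) := by
    intro v g hv hg
    have hdist := norm_sub_sq_le_two_mul_one_sub_inner hv.le hg
    have hinner : 0 ≤ 1 - ⟪g, v⟫ := by linarith [sq_nonneg ‖v - g‖]
    calc |H v - ⟪g, v⟫ * H g| = |(H v - H g) + (1 - ⟪g, v⟫) * H g| := by ring_nf
      _ ≤ |H v - H g| + |(1 - ⟪g, v⟫) * H g| := abs_add_le _ _
      _ = |H v - H g| + (1 - ⟪g, v⟫) * |H g| := by rw [abs_mul, abs_of_nonneg hinner]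
      _ ≤ (η + K * (2 * (1 - ⟪g, v⟫))) + (1 - ⟪g, v⟫) * B := by
        gcongr
        exacts [(hHK v g hv.le hg).trans (by gcongr), hB g hg]
      _ = η + (2 * K + B) * (1 - ⟪g, v⟫) := by ring
  refine ⟨2 * K + B, by positivity, fun v g hg => ?_⟩
  rcases eq_or_ne v 0 with rfl | hv
  · simpa using hhom 0 le_rfl 0
  · obtain ⟨n, d, hn, hd, rfl⟩ : ∃ (n : ℝ) (d : E), 0 < n ∧ ‖d‖ = 1 ∧ v = n • d :=
      ⟨‖v‖, ‖v‖⁻¹ • v, norm_pos_iff.2 hv, norm_smul_inv_norm (𝕜 := ℝ) hv,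
        (smul_inv_smul₀ (norm_ne_zero_iff.2 hv) v).symm⟩
    have hnorm : ‖n • d‖ = n := by rw [norm_smul, hd, mul_one, Real.norm_of_nonneg hn.le]
    rw [hhom n hn.le, inner_smul_right, hnorm]
    calc |n * H d - n * ⟪g, d⟫ * H g| = n * |H d - ⟪g, d⟫ * H g| := by
          rw [mul_assoc, ← mul_sub, abs_mul, abs_of_pos hn]
      _ ≤ n * (η + (2 * K + B) * (1 - ⟪g, d⟫)) := by gcongr; exact unit_bound d g hd hg
      _ = η * n + (2 * K + B) * (n - n * ⟪g, d⟫) := by ring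

lemma IsPosHomogeneous.exists_abs_le_mul_norm [ProperSpace E] {H : E → ℝ}
    (hhom : IsPosHomogeneous H) (hH : Continuous H) : ∃ C, ∀ v, |H v| ≤ C * ‖v‖ := by
  obtain ⟨K, -, hK⟩ := hhom.exists_abs_sub_inner_mul_le hH one_pos
  exact ⟨1 + K, fun v => by simpa [add_mul] using hK v 0 (by simp)⟩

lemma norm_inv_max_smul_le_one (τ : ℝ) (h : E) : ‖(max τ ‖h‖)⁻¹ • h‖ ≤ 1 := by
  have hmax : 0 ≤ max τ ‖h‖ := (norm_nonneg h).trans (le_max_right _ _)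
  rw [norm_smul, norm_inv, Real.norm_of_nonneg hmax, ← div_eq_inv_mul]
  exact div_le_one_of_le₀ (le_max_right _ _) hmax

lemma norm_sub_inner_inv_max_smul_le {τ : ℝ} (hτ : 0 < τ) (v h : E) :
    ‖v‖ - ⟪(max τ ‖h‖)⁻¹ • h, v⟫ ≤ 2 * ‖v - h‖ + τ := by
  have hself : ‖h‖ - ⟪(max τ ‖h‖)⁻¹ • h, h⟫ ≤ τ := by
    rw [real_inner_smul_left, real_inner_self_eq_norm_sq]
    rcases le_total ‖h‖ τ with hle | hle
    · have : 0 ≤ (max τ ‖h‖)⁻¹ * ‖h‖ ^ 2 := by positivity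
      linarith
    · have hpos := hτ.trans_le hle
      rw [max_eq_right hle, sq, inv_mul_cancel_left₀ hpos.ne']
      linarith
  have hdiff : ⟪(max τ ‖h‖)⁻¹ • h, h - v⟫ ≤ ‖v - h‖ := by
    rw [norm_sub_rev]
    exact (real_inner_le_norm _ _).trans
      (mul_le_of_le_one_left (norm_nonneg _) (norm_inv_max_smul_le_one τ h))
  rw [inner_sub_right] at hdiff
  linarith [norm_le_norm_add_norm_sub h v, norm_sub_rev h v]

end Homogeneous

section Approximation

variable {X E : Type*} [TopologicalSpace X] [MeasurableSpace X] [BorelSpace X]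
  [NormedAddCommGroup E]

lemma integral_norm_sub_inner_inv_max_smul_le [InnerProductSpace ℝ E] {μ : Measure X}
    [IsFiniteMeasureOnCompacts μ] {ρ h : X → E} (hρ : Integrable ρ μ) (hc : Continuous h)
    (hs : HasCompactSupport h) {τ : ℝ} (hτ : 0 < τ) :
    ∫ x, (‖ρ x‖ - ⟪(max τ ‖h x‖)⁻¹ • h x, ρ x⟫) ∂μ ≤
      2 * ∫ x, ‖ρ x - h x‖ ∂μ + μ.real (tsupport h) * τ := by
  have hpt : ∀ x, ‖ρ x‖ - ⟪(max τ ‖h x‖)⁻¹ • h x, ρ x⟫ ≤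
      2 * ‖ρ x - h x‖ + (tsupport h).indicator (fun _ => τ) x := by
    intro x
    by_cases hx : x ∈ tsupport h
    · rw [Set.indicator_of_mem hx]
      exact norm_sub_inner_inv_max_smul_le hτ (ρ x) (h x)
    · have hn := norm_nonneg (ρ x)
      simp only [image_eq_zero_of_notMem_tsupport hx, smul_zero, inner_zero_left, sub_zero,
        Set.indicator_of_notMem hx, add_zero]
      linarith
  have hS : MeasurableSet (tsupport h) := (isClosed_tsupport h).measurableSet
  have hdist : Integrable (fun x => 2 * ‖ρ x - h x‖) μ :=
    (hρ.sub (hc.integrable_of_hasCompactSupport hs)).norm.const_mul 2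
  have hind : Integrable ((tsupport h).indicator fun _ => τ) μ :=
    (integrable_indicator_iff hS).2 (integrableOn_const hs.isCompact.measure_ne_top)
  calc ∫ x, (‖ρ x‖ - ⟪(max τ ‖h x‖)⁻¹ • h x, ρ x⟫) ∂μ
      ≤ ∫ x, (2 * ‖ρ x - h x‖ + (tsupport h).indicator (fun _ => τ) x) ∂μ := by
        refine integral_mono_of_nonneg (Eventually.of_forall fun x => ?_) (hdist.add hind)
          (Eventually.of_forall hpt)
        exact sub_nonneg.2 ((real_inner_le_norm _ _).trans
          (mul_le_of_le_one_left (norm_nonneg _) (norm_inv_max_smul_le_one τ (h x))))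
    _ = 2 * ∫ x, ‖ρ x - h x‖ ∂μ + μ.real (tsupport h) * τ := by
        rw [integral_add hdist hind, integral_const_mul, integral_indicator_const _ hS,
          smul_eq_mul]

variable [T2Space X] [LocallyCompactSpace X] {lam : Measure X} [lam.Regular] {Ω : Set X}

lemma exists_cutoff_integral_norm_sub_le [NormedSpace ℝ E] (hΩ : IsOpen Ω) {h : X → E}
    (hc : Continuous h) (hs : HasCompactSupport h) {δ : ℝ} (hδ : 0 < δ) :
    ∃ χ : C(X, ℝ), tsupport χ ⊆ Ω ∧ ∫ x in Ω, ‖h x - χ x • h x‖ ∂lam ≤ δ := by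
  obtain ⟨B, hB0, hB⟩ : ∃ B, 0 < B ∧ ∀ x, ‖h x‖ ≤ B := by
    obtain ⟨C, hC⟩ := hs.exists_bound_of_continuous hc
    exact ⟨max C 1, by positivity, fun x => (hC x).trans (le_max_left _ _)⟩
  have hmeas : MeasurableSet (Ω ∩ tsupport h) :=
    hΩ.measurableSet.inter (isClosed_tsupport h).measurableSet
  obtain ⟨K, hKΩ, hK, hKsmall⟩ := hmeas.exists_isCompact_sdiff_lt (μ := lam)
    (measure_ne_top_of_subset Set.inter_subset_right hs.isCompact.measure_ne_top)
    (ε := ENNReal.ofReal (δ / B)) (by simpa using div_pos hδ hB0)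
  obtain ⟨χ, hχK, -, hχΩ, hχ⟩ := exists_continuousMap_one_of_isCompact_subset_isOpen hK hΩ
    (hKΩ.trans Set.inter_subset_left)
  refine ⟨χ, hχΩ, ?_⟩
  set A := (Ω ∩ tsupport h) \ K
  have hA : MeasurableSet A := hmeas.diff hK.measurableSet
  have hbound : ∀ x ∈ Ω, ‖h x - χ x • h x‖ ≤ A.indicator (fun _ => B) x := by
    intro x hx
    by_cases hxA : x ∈ A
    · rw [Set.indicator_of_mem hxA, show h x - χ x • h x = (1 - χ x) • h x by module, norm_smul,
        Real.norm_of_nonneg (by linarith [(hχ x).2])]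
      exact (mul_le_of_le_one_left (norm_nonneg _) (by linarith [(hχ x).1])).trans (hB x)
    · rw [Set.indicator_of_notMem hxA]
      by_cases hxK : x ∈ K
      · simp [hχK hxK]
      · simp [image_eq_zero_of_notMem_tsupport fun hxs => hxA ⟨⟨hx, hxs⟩, hxK⟩]
  calc ∫ x in Ω, ‖h x - χ x • h x‖ ∂lam ≤ ∫ x in Ω, A.indicator (fun _ => B) x ∂lam := by
        refine integral_mono_of_nonneg (Eventually.of_forall fun _ => norm_nonneg _) ?_
          (ae_restrict_of_forall_mem hΩ.measurableSet hbound)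
        refine (integrable_indicator_iff hA).2 (integrableOn_const ?_)
        exact ((Measure.restrict_apply_le _ _).trans_lt (hKsmall.trans ENNReal.ofReal_lt_top)).ne
    _ = lam.real A * B := by
        rw [integral_indicator_const _ hA, measureReal_restrict_apply hA,
          Set.inter_eq_left.2 (Set.sdiff_subset.trans Set.inter_subset_left), smul_eq_mul]
    _ ≤ δ / B * B := by
        gcongr
        exact ENNReal.toReal_le_of_le_ofReal (by positivity) hKsmall.le
    _ = δ := div_mul_cancel₀ _ hB0.ne'

variable [NormalSpace X]

lemma exists_tsupport_subset_integral_norm_sub_le [NormedSpace ℝ E] (hΩ : IsOpen Ω) {ρ : X → E}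
    (hρ : IntegrableOn ρ Ω lam) {δ : ℝ} (hδ : 0 < δ) :
    ∃ h : X → E, Continuous h ∧ HasCompactSupport h ∧ tsupport h ⊆ Ω ∧
      ∫ x in Ω, ‖ρ x - h x‖ ∂lam ≤ δ := by
  obtain ⟨h, hs, hρh, hc, hi⟩ := ((integrable_indicator_iff hΩ.measurableSet).2
    hρ).exists_hasCompactSupport_integral_sub_le (half_pos hδ)
  obtain ⟨χ, hχΩ, hχ⟩ := exists_cutoff_integral_norm_sub_le (lam := lam) hΩ hc hs (half_pos hδ)
  have hχs : HasCompactSupport fun x => χ x • h x := hs.smul_left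
  have hχc : Continuous fun x => χ x • h x := χ.continuous.smul hc
  have hχi : Integrable (fun x => χ x • h x) lam := hχc.integrable_of_hasCompactSupport hχs
  refine ⟨fun x => χ x • h x, hχc, hχs, (tsupport_smul_subset_left _ _).trans hχΩ, ?_⟩
  have hnear : ∫ x in Ω, ‖ρ x - h x‖ ∂lam ≤ δ / 2 := by
    calc ∫ x in Ω, ‖ρ x - h x‖ ∂lam = ∫ x in Ω, ‖Ω.indicator ρ x - h x‖ ∂lam :=
          setIntegral_congr_fun hΩ.measurableSet fun x hx => by simp [hx]
      _ ≤ ∫ x, ‖Ω.indicator ρ x - h x‖ ∂lam :=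
          setIntegral_le_integral
            (((integrable_indicator_iff hΩ.measurableSet).2 hρ).sub hi).norm
            (Eventually.of_forall fun _ => norm_nonneg _)
      _ ≤ δ / 2 := hρh
  have hi' := hi.integrableOn (s := Ω)
  have hsum := (hρ.sub hi').norm.add (hi'.sub hχi.integrableOn).norm
  calc ∫ x in Ω, ‖ρ x - χ x • h x‖ ∂lam
      ≤ ∫ x in Ω, (‖ρ x - h x‖ + ‖h x - χ x • h x‖) ∂lam :=
        integral_mono (hρ.sub hχi.integrableOn).norm hsum fun x =>
          norm_sub_le_norm_sub_add_norm_sub _ _ _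
    _ = ∫ x in Ω, ‖ρ x - h x‖ ∂lam + ∫ x in Ω, ‖h x - χ x • h x‖ ∂lam :=
        integral_add (hρ.sub hi').norm (hi'.sub hχi.integrableOn).norm
    _ ≤ δ := by linarith

lemma exists_tsupport_subset_integral_norm_sub_inner_le [InnerProductSpace ℝ E] (hΩ : IsOpen Ω)
    {ρ : X → E} (hρ : IntegrableOn ρ Ω lam) {δ : ℝ} (hδ : 0 < δ) :
    ∃ g : X → E, Continuous g ∧ HasCompactSupport g ∧ tsupport g ⊆ Ω ∧ (∀ x, ‖g x‖ ≤ 1) ∧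
      ∫ x in Ω, (‖ρ x‖ - ⟪g x, ρ x⟫) ∂lam ≤ δ := by
  obtain ⟨h, hc, hs, hΩs, hρh⟩ :=
    exists_tsupport_subset_integral_norm_sub_le hΩ hρ (by positivity : 0 < δ / 4)
  set m := (lam.restrict Ω).real (tsupport h)
  have hm : 0 ≤ m := measureReal_nonneg
  have hτ : 0 < δ / (2 * (m + 1)) := by positivity
  set τ := δ / (2 * (m + 1)) with hτdef
  set g : X → E := fun x => (max τ ‖h x‖)⁻¹ • h x
  have hgs : tsupport g ⊆ tsupport h := tsupport_smul_subset_right _ _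
  have hgc : Continuous g :=
    ((continuous_const.max hc.norm).inv₀ fun x => (hτ.trans_le (le_max_left _ _)).ne').smul hc
  refine ⟨g, hgc, hs.of_isClosed_subset (isClosed_tsupport g) hgs, hgs.trans hΩs,
    fun x => norm_inv_max_smul_le_one τ (h x), ?_⟩
  calc ∫ x in Ω, (‖ρ x‖ - ⟪g x, ρ x⟫) ∂lam
      ≤ 2 * ∫ x in Ω, ‖ρ x - h x‖ ∂lam + m * τ :=
        integral_norm_sub_inner_inv_max_smul_le hρ hc hs hτ
    _ ≤ 2 * (δ / 4) + (m + 1) * τ := by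
        gcongr
        linarith
    _ = δ := by rw [hτdef]; field_simp; ring

end Approximation

section Continuity

variable {X E ι : Type*} [MeasurableSpace X] {Ω : Set X} [NormedAddCommGroup E]
  [InnerProductSpace ℝ E] {L : Filter ι}

lemma tendsto_of_forall_exists_approx {a : ι → ℝ} {A : ℝ}
    (h : ∀ δ > 0, ∃ (b r : ι → ℝ) (B R : ℝ), Tendsto b L (𝓝 B) ∧ Tendsto r L (𝓝 R) ∧ R < δ ∧
      (∀ k, |a k - b k| ≤ r k) ∧ |A - B| ≤ R) : Tendsto a L (𝓝 A) := by
  rw [Metric.tendsto_nhds]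
  intro δ hδ
  obtain ⟨b, r, B, R, hb, hr, hR, hab, hAB⟩ := h (δ / 3) (by positivity)
  filter_upwards [hr.eventually_lt_const hR, Metric.tendsto_nhds.1 hb (δ / 3) (by positivity)]
    with k hrk hbk
  rw [Real.dist_eq] at hbk ⊢
  calc |a k - A| = |(a k - b k) + (b k - B) + (B - A)| := by ring_nf
    _ ≤ |a k - b k| + |b k - B| + |B - A| := abs_add_three _ _ _
    _ < δ := by rw [abs_sub_comm B A]; linarith [hab k]

lemma integrable_inner_of_bounded {μ : Measure X} {g p : X → E} {C : ℝ}
    (hg : AEStronglyMeasurable g μ) (hgC : ∀ᵐ x ∂μ, ‖g x‖ ≤ C) (hp : Integrable p μ) :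
    Integrable (fun x => ⟪g x, p x⟫) μ :=
  (innerSL ℝ).integrable_of_bilin_of_bdd_left C hg hgC hp

variable [ProperSpace E] {H : E → ℝ}

lemma IsPosHomogeneous.integrable_comp (hhom : IsPosHomogeneous H) (hH : Continuous H)
    {μ : Measure X} {p : X → E} (hp : Integrable p μ) : Integrable (fun x => H (p x)) μ := by
  obtain ⟨C, hC⟩ := hhom.exists_abs_le_mul_norm hH
  exact (hp.norm.const_mul C).mono' (hH.comp_aestronglyMeasurable hp.1)
    (Eventually.of_forall fun x => hC (p x))

lemma IsPosHomogeneous.abs_integral_sub_le (hhom : IsPosHomogeneous H) (hH : Continuous H)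
    {η K M : ℝ} (hHK : ∀ v w, ‖w‖ ≤ 1 → |H v - ⟪w, v⟫ * H w| ≤ η * ‖v‖ + K * (‖v‖ - ⟪w, v⟫))
    {μ : Measure X} {φ : X → ℝ} (hφ : AEStronglyMeasurable φ μ) (hM : ∀ᵐ x ∂μ, |φ x| ≤ M)
    {g : X → E} (hg : AEStronglyMeasurable g μ) (hg1 : ∀ᵐ x ∂μ, ‖g x‖ ≤ 1)
    {p : X → E} (hp : Integrable p μ) :
    |∫ x, H (p x) * φ x ∂μ - ∫ x, ⟪(φ x * H (g x)) • g x, p x⟫ ∂μ| ≤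
      M * (η * ∫ x, ‖p x‖ ∂μ + K * (∫ x, ‖p x‖ ∂μ - ∫ x, ⟪g x, p x⟫ ∂μ)) := by
  obtain ⟨C, hC⟩ := (isCompact_closedBall (0 : E) 1).exists_bound_of_continuousOn hH.continuousOn
  simp only [mem_closedBall_zero_iff] at hC
  have hgp : Integrable (fun x => ⟪g x, p x⟫) μ := integrable_inner_of_bounded hg hg1 hp
  have hHp : Integrable (fun x => H (p x) * φ x) μ := (hhom.integrable_comp hH hp).mul_bdd hφ hM
  have hgHp : Integrable (fun x => ⟪g x, p x⟫ * H (g x) * φ x) μ :=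
    (hgp.mul_bdd (hH.comp_aestronglyMeasurable hg) (hg1.mono fun x => hC (g x))).mul_bdd hφ hM
  have hgap : Integrable (fun x => ‖p x‖ - ⟪g x, p x⟫) μ := hp.norm.sub hgp
  have htest : ∀ x, ⟪(φ x * H (g x)) • g x, p x⟫ = ⟪g x, p x⟫ * H (g x) * φ x := fun x => by
    rw [real_inner_smul_left]; ring
  simp only [htest]
  rw [← integral_sub hHp hgHp, ← integral_sub hp.norm hgp, ← integral_const_mul,
    ← integral_const_mul, ← integral_add (hp.norm.const_mul η) (hgap.const_mul K),
    ← integral_const_mul, ← Real.norm_eq_abs]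
  refine norm_integral_le_of_norm_le
    (((hp.norm.const_mul η).add (hgap.const_mul K)).const_mul M) ?_
  filter_upwards [hM, hg1] with x hMx hgx
  rw [← sub_mul, norm_mul, mul_comm]
  exact mul_le_mul hMx (hHK _ _ hgx) (norm_nonneg _) ((abs_nonneg _).trans hMx)

variable [TopologicalSpace X] [T4Space X] [LocallyCompactSpace X] [BorelSpace X]
  {μ : ι → Measure X} {lam : Measure X} [lam.Regular]

/-- Reshetnyak's continuity theorem for integrands of the form `H (v) φ (x)`. -/
theorem IsPosHomogeneous.tendsto_setIntegral (hhom : IsPosHomogeneous H) (hH : Continuous H)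
    (hΩ : IsOpen Ω) {p : ι → X → E} (hp : ∀ k, IntegrableOn (p k) Ω (μ k))
    {ρ : X → E} (hρ : IntegrableOn ρ Ω lam)
    (hweak : ∀ ψ : X → E, Continuous ψ → HasCompactSupport ψ → tsupport ψ ⊆ Ω →
      Tendsto (fun k => ∫ x in Ω, ⟪ψ x, p k x⟫ ∂μ k) L (𝓝 (∫ x in Ω, ⟪ψ x, ρ x⟫ ∂lam)))
    (hmass : Tendsto (fun k => ∫ x in Ω, ‖p k x‖ ∂μ k) L (𝓝 (∫ x in Ω, ‖ρ x‖ ∂lam)))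
    {φ : X → ℝ} (hφ : ContinuousOn φ Ω) {M : ℝ} (hM : ∀ x ∈ Ω, |φ x| ≤ M) :
    Tendsto (fun k => ∫ x in Ω, H (p k x) * φ x ∂μ k) L
      (𝓝 (∫ x in Ω, H (ρ x) * φ x ∂lam)) := by
  refine tendsto_of_forall_exists_approx fun δ hδ => ?_
  wlog hM0 : 0 < M generalizing M
  · exact this (M := max M 1) (fun x hx => (hM x hx).trans (le_max_left _ _)) (by positivity)
  set m := ∫ x in Ω, ‖ρ x‖ ∂lam
  have hm : 0 ≤ m := integral_nonneg fun _ => norm_nonneg _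
  obtain ⟨K, hK, hHK⟩ := hhom.exists_abs_sub_inner_mul_le hH
    (by positivity : 0 < δ / (4 * M * (m + 1)))
  set η := δ / (4 * M * (m + 1)) with hη
  obtain ⟨g, hg, hgs, hgΩ, hg1, hgρ⟩ := exists_tsupport_subset_integral_norm_sub_inner_le hΩ hρ
    (by positivity : 0 < δ / (4 * M * (K + 1)))
  set w := ∫ x in Ω, ⟪g x, ρ x⟫ ∂lam
  have hsmall : M * (η * m + K * (m - w)) < δ := by
    rw [integral_sub hρ.norm (integrable_inner_of_bounded hg.aestronglyMeasurable
      (Eventually.of_forall hg1) hρ)] at hgρ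
    have h₁ : M * (η * m) ≤ δ / 4 := calc
      M * (η * m) ≤ M * (η * (m + 1)) := by gcongr; linarith
      _ = δ / 4 := by rw [hη]; field_simp
    have h₂ : M * (K * (m - w)) ≤ δ / 4 := calc
      M * (K * (m - w)) ≤ M * (K * (δ / (4 * M * (K + 1)))) := by gcongr
      _ ≤ M * ((K + 1) * (δ / (4 * M * (K + 1)))) := by gcongr; linarith
      _ = δ / 4 := by field_simp
    linarith
  set ψ : X → E := fun x => (φ x * H (g x)) • g x
  have hψs : tsupport ψ ⊆ tsupport g := tsupport_smul_subset_right _ _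
  have hψ : Continuous ψ := ContinuousOn.continuous_of_tsupport_subset
    ((hφ.mul (hH.comp hg).continuousOn).smul hg.continuousOn) hΩ (hψs.trans hgΩ)
  have happrox := fun {ν : Measure X} {p : X → E} (hp : IntegrableOn p Ω ν) =>
    hhom.abs_integral_sub_le hH hHK (hφ.aestronglyMeasurable hΩ.measurableSet)
      (ae_restrict_of_forall_mem hΩ.measurableSet hM) hg.aestronglyMeasurable
      (Eventually.of_forall hg1) hp
  exact ⟨_, _, _, _,
    hweak ψ hψ (hgs.of_isClosed_subset (isClosed_tsupport ψ) hψs) (hψs.trans hgΩ),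
    ((hmass.const_mul η).add ((hmass.sub (hweak g hg hgs hgΩ)).const_mul K)).const_mul M, hsmall,
    fun k => happrox (hp k), happrox hρ⟩

end Continuity

section Quadratic

variable {E : Type*} [NormedAddCommGroup E] [NormedSpace ℝ E] (B : E →L[ℝ] E →L[ℝ] ℝ)

/-- The positively homogeneous function of degree one that agrees with the quadratic form of `B`
on unit vectors. The convention `0⁻¹ = 0` gives it the value `0` at the origin, which makes it
continuous there. -/
noncomputable def normalizedQuadratic (v : E) : ℝ := ‖v‖⁻¹ * B v v

variable {B}

lemma normalizedQuadratic_of_norm_eq_one {v : E} (hv : ‖v‖ = 1) :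
    normalizedQuadratic B v = B v v := by
  simp [normalizedQuadratic, hv]

lemma normalizedQuadratic_smul (t : ℝ) (v : E) :
    normalizedQuadratic B (t • v) = |t| * normalizedQuadratic B v := by
  rcases eq_or_ne t 0 with rfl | ht
  · simp [normalizedQuadratic]
  · simp only [normalizedQuadratic, norm_smul, Real.norm_eq_abs, map_smul,
      smul_apply, smul_eq_mul]
    have habs : |t| ≠ 0 := abs_ne_zero.2 ht
    rw [mul_inv, ← mul_assoc t t, ← abs_mul_abs_self t]
    field_simp

lemma isPosHomogeneous_normalizedQuadratic : IsPosHomogeneous (normalizedQuadratic B) :=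
  fun t ht v => by rw [normalizedQuadratic_smul, abs_of_nonneg ht]

lemma abs_normalizedQuadratic_le (v : E) : |normalizedQuadratic B v| ≤ ‖B‖ * ‖v‖ := by
  rcases eq_or_ne v 0 with rfl | hv
  · simp [normalizedQuadratic]
  · rw [normalizedQuadratic, abs_mul, abs_inv, abs_norm, inv_mul_le_iff₀ (norm_pos_iff.2 hv)]
    calc |B v v| ≤ ‖B‖ * ‖v‖ * ‖v‖ := B.le_opNorm₂ v v
      _ = ‖v‖ * (‖B‖ * ‖v‖) := by ring

lemma continuous_normalizedQuadratic : Continuous (normalizedQuadratic B) := by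
  refine continuous_iff_continuousAt.2 fun v => ?_
  rcases eq_or_ne v 0 with rfl | hv
  · have h0 : normalizedQuadratic B 0 = 0 := by simp [normalizedQuadratic]
    rw [ContinuousAt, h0]
    refine squeeze_zero_norm abs_normalizedQuadratic_le ?_
    simpa using (continuous_const.mul continuous_norm).tendsto (f := fun v : E => ‖B‖ * ‖v‖) 0
  · exact (continuousAt_id.norm.inv₀ (norm_ne_zero_iff.2 hv)).mul
      ((B.continuous.clm_apply continuous_id).continuousAt)

lemma abs_mul_apply_sub_normalizedQuadratic_smul_le (e a : ℝ) (q : E) :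
    |e * B q q - normalizedQuadratic B (a • q)| ≤ ‖B‖ * |e * ‖q‖ ^ 2 - ‖a • q‖| := by
  have hBq : B q q = ‖q‖ * normalizedQuadratic B q := by
    rcases eq_or_ne q 0 with rfl | hq
    · simp
    · rw [normalizedQuadratic, mul_inv_cancel_left₀ (norm_ne_zero_iff.2 hq)]
  rw [normalizedQuadratic_smul, hBq, norm_smul, Real.norm_eq_abs]
  calc |e * (‖q‖ * normalizedQuadratic B q) - |a| * normalizedQuadratic B q|
      = |(e * ‖q‖ - |a|)| * |normalizedQuadratic B q| := by rw [← abs_mul]; ring_nf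
    _ ≤ |(e * ‖q‖ - |a|)| * (‖B‖ * ‖q‖) := by gcongr; exact abs_normalizedQuadratic_le q
    _ = ‖B‖ * |e * ‖q‖ ^ 2 - |a| * ‖q‖| := by
      rw [sq, ← mul_assoc e, ← sub_mul, abs_mul, abs_norm]; ring

end Quadratic

section QuadraticConvergence

variable {X E ι : Type*} [MeasurableSpace X]

lemma integrable_mul_apply_apply [NormedAddCommGroup E] [NormedSpace ℝ E]
    (B : E →L[ℝ] E →L[ℝ] ℝ) {μ : Measure X} {e : X → ℝ} {q : X → E}
    (he : AEStronglyMeasurable e μ) (hq : AEStronglyMeasurable q μ)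
    (hi : Integrable (fun x => e x * ‖q x‖ ^ 2) μ) :
    Integrable (fun x => e x * B (q x) (q x)) μ := by
  refine (hi.norm.const_mul ‖B‖).mono' (he.mul (B.aestronglyMeasurable_comp₂ hq hq))
    (Eventually.of_forall fun x => ?_)
  calc ‖e x * B (q x) (q x)‖ ≤ ‖e x‖ * (‖B‖ * ‖q x‖ * ‖q x‖) := by
        rw [norm_mul]; gcongr; exact B.le_opNorm₂ _ _
    _ = ‖B‖ * ‖e x * ‖q x‖ ^ 2‖ := by rw [norm_mul, norm_pow, norm_norm]; ring

lemma abs_integral_sub_normalizedQuadratic_le [NormedAddCommGroup E] [NormedSpace ℝ E]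
    (B : E →L[ℝ] E →L[ℝ] ℝ) {μ : Measure X} {e a : X → ℝ} {q : X → E}
    (he : AEStronglyMeasurable e μ) (hq : AEStronglyMeasurable q μ)
    (henergy : Integrable (fun x => e x * ‖q x‖ ^ 2) μ) (hp : Integrable (fun x => a x • q x) μ)
    {φ : X → ℝ} (hφ : AEStronglyMeasurable φ μ) {M : ℝ} (hM : ∀ᵐ x ∂μ, |φ x| ≤ M) :
    |∫ x, e x * B (q x) (q x) * φ x ∂μ - ∫ x, normalizedQuadratic B (a x • q x) * φ x ∂μ| ≤
      ‖B‖ * M * ∫ x, |e x * ‖q x‖ ^ 2 - ‖a x • q x‖| ∂μ := by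
  have hN : Integrable (fun x => normalizedQuadratic B (a x • q x)) μ :=
    (hp.norm.const_mul ‖B‖).mono' (continuous_normalizedQuadratic.comp_aestronglyMeasurable hp.1)
      (Eventually.of_forall fun x => abs_normalizedQuadratic_le (a x • q x))
  rw [← integral_sub ((integrable_mul_apply_apply B he hq henergy).mul_bdd hφ hM)
    (hN.mul_bdd hφ hM), ← integral_const_mul, ← Real.norm_eq_abs]
  refine norm_integral_le_of_norm_le ((henergy.sub hp.norm).abs.const_mul _) ?_
  filter_upwards [hM] with x hMx
  rw [← sub_mul, norm_mul, mul_right_comm]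
  exact mul_le_mul (abs_mul_apply_sub_normalizedQuadratic_smul_le _ _ _) hMx
    (norm_nonneg _) (by positivity)

variable [TopologicalSpace X] [T4Space X] [LocallyCompactSpace X] [BorelSpace X]
  [NormedAddCommGroup E] [InnerProductSpace ℝ E] [ProperSpace E] {L : Filter ι} {Ω : Set X}
  {μ : ι → Measure X} {lam : Measure X} [lam.Regular]

theorem tendsto_setIntegral_mul_apply_apply (B : E →L[ℝ] E →L[ℝ] ℝ) (hΩ : IsOpen Ω)
    {e a : ι → X → ℝ} {q : ι → X → E} {ρ : X → E}
    (he : ∀ k, AEStronglyMeasurable (e k) ((μ k).restrict Ω))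
    (hq : ∀ k, AEStronglyMeasurable (q k) ((μ k).restrict Ω))
    (henergy : ∀ k, IntegrableOn (fun x => e k x * ‖q k x‖ ^ 2) Ω (μ k))
    (hp : ∀ k, IntegrableOn (fun x => a k x • q k x) Ω (μ k)) (hρ : IntegrableOn ρ Ω lam)
    (hweak : ∀ ψ : X → E, Continuous ψ → HasCompactSupport ψ → tsupport ψ ⊆ Ω →
      Tendsto (fun k => ∫ x in Ω, ⟪ψ x, a k x • q k x⟫ ∂μ k) L
        (𝓝 (∫ x in Ω, ⟪ψ x, ρ x⟫ ∂lam)))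
    (hmass : Tendsto (fun k => ∫ x in Ω, ‖a k x • q k x‖ ∂μ k) L (𝓝 (∫ x in Ω, ‖ρ x‖ ∂lam)))
    (hdiscr : Tendsto (fun k => ∫ x in Ω, |e k x * ‖q k x‖ ^ 2 - ‖a k x • q k x‖| ∂μ k) L (𝓝 0))
    {φ : X → ℝ} (hφ : ContinuousOn φ Ω) {M : ℝ} (hM : ∀ x ∈ Ω, |φ x| ≤ M) :
    Tendsto (fun k => ∫ x in Ω, e k x * B (q k x) (q k x) * φ x ∂μ k) L
      (𝓝 (∫ x in Ω, normalizedQuadratic B (ρ x) * φ x ∂lam)) := by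
  have hlim := isPosHomogeneous_normalizedQuadratic.tendsto_setIntegral
    (continuous_normalizedQuadratic (B := B)) hΩ hp hρ hweak hmass hφ hM
  have herror : Tendsto (fun k => ∫ x in Ω, e k x * B (q k x) (q k x) * φ x ∂μ k
      - ∫ x in Ω, normalizedQuadratic B (a k x • q k x) * φ x ∂μ k) L (𝓝 0) :=
    squeeze_zero_norm (fun k => abs_integral_sub_normalizedQuadratic_le B (he k) (hq k)
      (henergy k) (hp k) (hφ.aestronglyMeasurable hΩ.measurableSet)
      (ae_restrict_of_forall_mem hΩ.measurableSet hM)) (by simpa using hdiscr.const_mul (‖B‖ * M))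
  simpa using herror.add hlim

theorem tendsto_setIntegral_mul_apply_apply_of_norm_eq_one (B : E →L[ℝ] E →L[ℝ] ℝ)
    (hΩ : IsOpen Ω) (hlam : lam Ω ≠ ⊤) {e a : ι → X → ℝ} {q : ι → X → E} {ρ : X → E}
    (he : ∀ k, AEStronglyMeasurable (e k) ((μ k).restrict Ω))
    (hq : ∀ k, AEStronglyMeasurable (q k) ((μ k).restrict Ω))
    (henergy : ∀ k, IntegrableOn (fun x => e k x * ‖q k x‖ ^ 2) Ω (μ k))
    (hp : ∀ k, IntegrableOn (fun x => a k x • q k x) Ω (μ k))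
    (hρ : AEStronglyMeasurable ρ (lam.restrict Ω)) (hρ1 : ∀ᵐ x ∂lam.restrict Ω, ‖ρ x‖ = 1)
    (hweak : ∀ ψ : X → E, Continuous ψ → HasCompactSupport ψ → tsupport ψ ⊆ Ω →
      Tendsto (fun k => ∫ x in Ω, ⟪ψ x, a k x • q k x⟫ ∂μ k) L
        (𝓝 (∫ x in Ω, ⟪ψ x, ρ x⟫ ∂lam)))
    (hmass : Tendsto (fun k => ∫ x in Ω, ‖a k x • q k x‖ ∂μ k) L (𝓝 (lam Ω).toReal))
    (hdiscr : Tendsto (fun k => ∫ x in Ω, |e k x * ‖q k x‖ ^ 2 - ‖a k x • q k x‖| ∂μ k) L (𝓝 0))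
    {φ : X → ℝ} (hφ : ContinuousOn φ Ω) {M : ℝ} (hM : ∀ x ∈ Ω, |φ x| ≤ M) :
    Tendsto (fun k => ∫ x in Ω, e k x * B (q k x) (q k x) * φ x ∂μ k) L
      (𝓝 (∫ x in Ω, B (ρ x) (ρ x) * φ x ∂lam)) := by
  have : IsFiniteMeasure (lam.restrict Ω) := isFiniteMeasure_restrict.2 hlam
  have hρi : IntegrableOn ρ Ω lam := Integrable.of_bound hρ 1 (hρ1.mono fun x hx => hx.le)
  have hmass_eq : ∫ x in Ω, ‖ρ x‖ ∂lam = (lam Ω).toReal := by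
    simp [integral_congr_ae hρ1, Measure.real]
  have hlimit_eq : ∫ x in Ω, normalizedQuadratic B (ρ x) * φ x ∂lam =
      ∫ x in Ω, B (ρ x) (ρ x) * φ x ∂lam :=
    integral_congr_ae (hρ1.mono fun x hx => by
      simp only [normalizedQuadratic_of_norm_eq_one hx])
  rw [← hmass_eq] at hmass
  rw [← hlimit_eq]
  exact tendsto_setIntegral_mul_apply_apply B hΩ he hq henergy hp hρi hweak hmass hdiscr hφ hM

end QuadraticConvergence

lemma integrableOn_of_continuous_of_isBounded {X F : Type*} [PseudoMetricSpace X] [ProperSpace X]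
    [MeasurableSpace X] [OpensMeasurableSpace X] [NormedAddCommGroup F] {μ : Measure X}
    [IsFiniteMeasureOnCompacts μ] {f : X → F} (hf : Continuous f) {s : Set X}
    (hs : Bornology.IsBounded s) : IntegrableOn f s μ :=
  (hf.continuousOn.integrableOn_compact' hs.isCompact_closure isClosed_closure.measurableSet)
    |>.mono_set subset_closure

lemma continuous_grad {N : ℕ} {u : (Fin N → ℝ) → ℝ} (hu : ContDiff ℝ 1 u) : Continuous (grad u) :=
  continuous_pi fun _ => (hu.continuous_fderiv one_ne_zero).clm_apply continuous_const

theorem quadratic_gradient_convergence_general {X κ ι : Type*} [TopologicalSpace X] [T4Space X]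
    [LocallyCompactSpace X] [MeasurableSpace X] [BorelSpace X] [Fintype κ] {L : Filter ι}
    {Ω : Set X} (hΩ : IsOpen Ω) {μ : ι → Measure X} {lam : Measure X} [lam.Regular]
    (hlam : lam Ω ≠ ⊤) {e a : ι → X → ℝ} {q : ι → X → κ → ℝ} {ρ : X → κ → ℝ}
    (he : ∀ k, AEStronglyMeasurable (e k) ((μ k).restrict Ω))
    (hq : ∀ k, AEStronglyMeasurable (q k) ((μ k).restrict Ω))
    (henergy : ∀ k, IntegrableOn (fun x => e k x * ∑ i, q k x i ^ 2) Ω (μ k))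
    (hp : ∀ k, IntegrableOn (fun x => a k x • q k x) Ω (μ k))
    (hρ : AEStronglyMeasurable ρ (lam.restrict Ω))
    (hρ1 : ∀ᵐ x ∂(lam.restrict Ω), √(∑ i, ρ x i ^ 2) = 1)
    (hweak : ∀ ψ : X → κ → ℝ, Continuous ψ → HasCompactSupport ψ → tsupport ψ ⊆ Ω →
      Tendsto (fun k => ∫ x in Ω, ∑ i, ψ x i * (a k x * q k x i) ∂μ k) L
        (𝓝 (∫ x in Ω, ∑ i, ψ x i * ρ x i ∂lam)))
    (hmass : Tendsto (fun k => ∫ x in Ω, √(∑ i, (a k x * q k x i) ^ 2) ∂μ k) L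
      (𝓝 (lam Ω).toReal))
    (hdiscr : Tendsto (fun k => ∫ x in Ω,
      |e k x * (∑ i, q k x i ^ 2) - √(∑ i, (a k x * q k x i) ^ 2)| ∂μ k) L (𝓝 0))
    {φ : X → ℝ} (hφ : ContinuousOn φ Ω) (hbdd : ∃ C : ℝ, ∀ x ∈ Ω, |φ x| ≤ C) (i j : κ) :
    Tendsto (fun k => ∫ x in Ω, e k x * q k x i * q k x j * φ x ∂μ k) L
      (𝓝 (∫ x in Ω, ρ x i * ρ x j * φ x ∂lam)) := by
  obtain ⟨C, hC⟩ := hbdd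
  let toE := (EuclideanSpace.equiv κ ℝ).symm
  have norm_toE : ∀ v, ‖toE v‖ = √(∑ i, v i ^ 2) := fun v => by
    simp [toE, EuclideanSpace.norm_eq]
  have norm_toE_sq : ∀ v, ‖toE v‖ ^ 2 = ∑ i, v i ^ 2 := fun v => by
    simp [toE, EuclideanSpace.real_norm_sq_eq]
  have inner_toE : ∀ w v, ⟪w, toE v⟫ = ∑ i, toE.symm w i * v i := fun w v => by
    simp [toE, PiLp.inner_apply, mul_comm]
  let B : EuclideanSpace ℝ κ →L[ℝ] EuclideanSpace ℝ κ →L[ℝ] ℝ :=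
    (EuclideanSpace.proj i).smulRight (EuclideanSpace.proj j)
  have B_toE : ∀ v, B (toE v) (toE v) = v i * v j := fun v => by simp [B, toE]
  have hpE : ∀ k, IntegrableOn (fun x => a k x • toE (q k x)) Ω (μ k) := fun k => by
    simpa [IntegrableOn] using toE.toContinuousLinearMap.integrable_comp (hp k)
  have hlim := tendsto_setIntegral_mul_apply_apply_of_norm_eq_one (μ := μ) (a := a) B hΩ hlam he
    (fun k => toE.continuous.comp_aestronglyMeasurable (hq k))
    (by simpa only [norm_toE_sq] using henergy) hpE (toE.continuous.comp_aestronglyMeasurable hρ)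
    (by simpa only [norm_toE] using hρ1)
    (fun ψ hψ hψc hψΩ => by
      simpa only [← map_smul, inner_toE, Pi.smul_apply, smul_eq_mul, Function.comp_apply] using
        hweak (toE.symm ∘ ψ) (toE.symm.continuous.comp hψ) (hψc.comp_left (map_zero _))
          ((tsupport_comp_subset (map_zero _) _).trans hψΩ))
    (by simpa only [← map_smul, norm_toE, Pi.smul_apply, smul_eq_mul] using hmass)
    (by simp only [norm_toE_sq]
        simpa only [← map_smul, norm_toE, Pi.smul_apply, smul_eq_mul] using hdiscr) hφ hC
  simpa only [B_toE, mul_assoc] using hlim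

/-- Key quadratic convergence lemma: if the vector fields
`p_k := |u_k² − 1| ∇u_k` converge weakly (as measures on `Ω`) to `ρ·λ` together with their
total masses, and if the discrepancy `∫_Ω |ε_k|∇u_k|² − |p_k||` vanishes, then
`∫_Ω ε_k ∂_i u_k ∂_j u_k φ → ∫_Ω ρ_i ρ_j φ dλ` for every bounded continuous `φ`. -/
theorem quadratic_gradient_convergence
    (N : ℕ) (Ω : Set (Fin N → ℝ)) (hΩo : IsOpen Ω) (hΩb : Bornology.IsBounded Ω)
    (ε : ℕ → ℝ) (hε : ∀ k, 0 < ε k) (hε0 : Tendsto ε atTop (𝓝 0))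
    (u : ℕ → (Fin N → ℝ) → ℝ) (hu : ∀ k, ContDiff ℝ 1 (u k))
    (lam0 : Measure (Fin N → ℝ)) [IsFiniteMeasure lam0]
    (ρ : (Fin N → ℝ) → (Fin N → ℝ)) (hρm : Measurable ρ)
    (hρ1 : ∀ᵐ x ∂(lam0.restrict Ω), Real.sqrt (∑ i, ρ x i ^ 2) = 1)
    (hweak : ∀ φ : (Fin N → ℝ) → (Fin N → ℝ),
      Continuous φ → HasCompactSupport φ → tsupport φ ⊆ Ω →
      Tendsto
        (fun k => ∫ x in Ω, ∑ i, φ x i * (|u k x ^ 2 - 1| * pdv (u k) i x)) atTop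
        (𝓝 (∫ x in Ω, (∑ i, φ x i * ρ x i) ∂lam0)))
    (hmass : Tendsto
      (fun k => ∫ x in Ω, Real.sqrt (∑ i, (|u k x ^ 2 - 1| * pdv (u k) i x) ^ 2)) atTop
      (𝓝 (lam0 Ω).toReal))
    (hdiscr : Tendsto
      (fun k => ∫ x in Ω,
        |ε k * (∑ i, pdv (u k) i x ^ 2)
          - Real.sqrt (∑ i, (|u k x ^ 2 - 1| * pdv (u k) i x) ^ 2)|) atTop
      (𝓝 0)) :
    ∀ φ : (Fin N → ℝ) → ℝ, ContinuousOn φ Ω → (∃ C : ℝ, ∀ x ∈ Ω, |φ x| ≤ C) →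
      ∀ i j : Fin N,
        Tendsto (fun k => ∫ x in Ω, ε k * pdv (u k) i x * pdv (u k) j x * φ x) atTop
          (𝓝 (∫ x in Ω, ρ x i * ρ x j * φ x ∂lam0)) := by
  intro φ hφ hbdd i j
  have hcont : ∀ k, Continuous (grad (u k)) := fun k => continuous_grad (hu k)
  exact quadratic_gradient_convergence_general (e := fun k _ => ε k)
    (a := fun k x => |u k x ^ 2 - 1|) (q := fun k => grad (u k)) hΩo (measure_ne_top _ _)
    (fun _ => aestronglyMeasurable_const) (fun k => (hcont k).aestronglyMeasurable)
    (fun k => integrableOn_of_continuous_of_isBounded (by fun_prop) hΩb)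
    (fun k => integrableOn_of_continuous_of_isBounded
      ((((hu k).continuous.pow 2).sub continuous_const).abs.smul (hcont k)) hΩb)
    hρm.aestronglyMeasurable hρ1 hweak hmass hdiscr hφ hbdd i j

end PaperAC
end

section
/- Let Ω ⊂ ℝ^N be open and bounded, let G : Ω × Ω → ℝ be integrable (G ∈ L¹(Ω×Ω)) and symmetric, G(x, y) = G(y, x). Let u : ℝ^N → ℝ be bounded and of class C³ with bounded derivatives, and let η, ζ : ℝ^N → ℝ^N be bounded and of class C³ with bounded derivatives. Define Φ_t(x) := x + t·η(x) + (t²/2)·ζ(x), let τ > 0 be such that Φ_t is a bijection of ℝ^N for |t| < τ, and set u_t(y) := u(Φ_t⁻¹(y)). Define B(t) := ∫_Ω ∫_Ω G(x, y) u_t(x) u_t(y) dx dy. Then B is differentiable at t = 0 with B'(0) = −2 ∫_Ω ∫_Ω G(x, y) u(y) (∇u(x)·η(x)) dx dy. -/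
open Filter MeasureTheory Topology
open scoped RealInnerProductSpace

namespace PaperAC

/-! An inner deformation moves `u` along the curve `t ↦ u ∘ Φ_t⁻¹` of bounded functions, which is
Lipschitz at `t = 0` uniformly in space and has pointwise derivative `-∇u·η` there. By dominated
convergence this makes it differentiable for the weak-* topology of `L^∞ = (L¹)*`, with no uniform
control of the difference quotients beyond their boundedness. Unlike weak-* differentiability in
general, these pointwise conditions pass to tensor products `v_t(x) w_t(y)`, so pairing with the
kernel `G ∈ L¹(Ω × Ω)` gives a product rule for the energy; the symmetry of `G` identifies its two
terms. -/

lemma integral_prod_symm_kernel_mul {α : Type*} [MeasurableSpace α] {μ : Measure α} [SFinite μ]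
    {K : α → α → ℝ} (hK : ∀ᵐ p ∂μ.prod μ, K p.1 p.2 = K p.2 p.1) (f g : α → ℝ) :
    ∫ p, K p.1 p.2 * (f p.1 * g p.2) ∂μ.prod μ = ∫ p, K p.1 p.2 * (g p.1 * f p.2) ∂μ.prod μ := by
  rw [← integral_prod_swap]
  refine integral_congr_ae (hK.mono fun p hp => ?_)
  simp only [Prod.fst_swap, Prod.snd_swap, hp, mul_comm (f _)]

section BoundedLipschitzCurves

variable {α β : Type*} [MeasurableSpace α] [MeasurableSpace β] {μ : Measure α} {ν : Measure β}
  {v : ℝ → α → ℝ} {v' : α → ℝ} {w : ℝ → β → ℝ} {w' : β → ℝ} {t₀ : ℝ}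

/-- A condition, stable under tensor products, under which a curve `t ↦ v t` of bounded functions is
weak-* differentiable at `t₀` in `L^∞(μ) = L¹(μ)*` with derivative `v'`, so that its integral
against any fixed `L¹` kernel can be differentiated. Bounds and derivatives are required at every
point rather than almost everywhere, so `μ` enters only through measurability. -/
structure HasBddLipDerivAt (μ : Measure α) (v : ℝ → α → ℝ) (v' : α → ℝ) (t₀ : ℝ) : Prop where
  aestronglyMeasurable : ∀ᶠ t in 𝓝 t₀, AEStronglyMeasurable (v t) μ
  exists_norm_le : ∃ C, ∀ᶠ t in 𝓝 t₀, ∀ x, ‖v t x‖ ≤ C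
  exists_norm_sub_le : ∃ L, ∀ᶠ t in 𝓝 t₀, ∀ x, ‖v t x - v t₀ x‖ ≤ L * ‖t - t₀‖
  hasDerivAt : ∀ x, HasDerivAt (fun t => v t x) (v' x) t₀

lemma hasBddLipDerivAt_const {f : α → ℝ} {C : ℝ} (hf : AEStronglyMeasurable f μ)
    (hC : ∀ x, ‖f x‖ ≤ C) : HasBddLipDerivAt μ (fun _ => f) 0 t₀ :=
  ⟨.of_forall fun _ => hf, ⟨C, .of_forall fun _ => hC⟩, ⟨0, by simp⟩,
    fun x => hasDerivAt_const t₀ (f x)⟩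

namespace HasBddLipDerivAt

lemma aestronglyMeasurable_deriv (hv : HasBddLipDerivAt μ v v' t₀) :
    AEStronglyMeasurable v' μ := by
  obtain ⟨t, ht, hvt⟩ := exists_seq_forall_of_frequently
    (hv.aestronglyMeasurable.filter_mono (nhdsWithin_le_nhds (s := {t₀}ᶜ))).frequently
  refine aestronglyMeasurable_of_tendsto_ae atTop
    (f := fun n x => slope (fun s => v s x) t₀ (t n)) (fun n => ?_)
    (.of_forall fun x => (hasDerivAt_iff_tendsto_slope.1 (hv.hasDerivAt x)).comp ht)
  exact ((hvt n).sub hv.aestronglyMeasurable.self_of_nhds).const_smul (t n - t₀)⁻¹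

lemma eventually_integrable_mul (hv : HasBddLipDerivAt μ v v' t₀) {K : α → ℝ}
    (hK : Integrable K μ) : ∀ᶠ t in 𝓝 t₀, Integrable (fun x => K x * v t x) μ := by
  obtain ⟨C, hC⟩ := hv.exists_norm_le
  filter_upwards [hv.aestronglyMeasurable, hC] with t hm hb
  exact hK.mul_bdd hm (.of_forall hb)

theorem hasDerivAt_integral_mul (hv : HasBddLipDerivAt μ v v' t₀)
    {K : α → ℝ} (hK : Integrable K μ) :
    Integrable (fun x => K x * v' x) μ ∧
      HasDerivAt (fun t => ∫ x, K x * v t x ∂μ) (∫ x, K x * v' x ∂μ) t₀ := by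
  obtain ⟨L, hL⟩ := hv.exists_norm_sub_le
  have hKv := hv.eventually_integrable_mul hK
  have hlip : ∀ᶠ t in 𝓝 t₀, ∀ x, ‖K x * v t x - K x * v t₀ x‖ ≤ ‖K x‖ * L * ‖t - t₀‖ := by
    filter_upwards [hL] with t ht x
    rw [← mul_sub, norm_mul, mul_assoc]
    gcongr
    exact ht x
  obtain ⟨hint, hderiv⟩ := hasFDerivAt_integral_of_dominated_loc_of_lip' (𝕜 := ℝ)
    (F' := fun x => ContinuousLinearMap.toSpanSingleton ℝ (K x * v' x))
    (hKv.and hlip) (fun t ht => ht.1.aestronglyMeasurable) hKv.self_of_nhds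
    (ContinuousLinearMap.toSpanSingletonCLE.continuous.comp_aestronglyMeasurable
      (hK.aestronglyMeasurable.mul hv.aestronglyMeasurable_deriv))
    (.of_forall fun x t ht => ht.2 x) (hK.norm.mul_const L)
    (.of_forall fun x => ((hv.hasDerivAt x).const_mul (K x)).hasFDerivAt)
  exact ⟨by simpa using hint.apply_continuousLinearMap 1,
    by simpa [ContinuousLinearMap.integral_apply hint] using hderiv.hasDerivAt⟩

lemma mul_prod [SFinite ν] (hv : HasBddLipDerivAt μ v v' t₀) (hw : HasBddLipDerivAt ν w w' t₀) :
    HasBddLipDerivAt (μ.prod ν) (fun t p => v t p.1 * w t p.2)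
      (fun p => v' p.1 * w t₀ p.2 + v t₀ p.1 * w' p.2) t₀ := by
  obtain ⟨A, hA⟩ := hv.exists_norm_le
  obtain ⟨B, hB⟩ := hw.exists_norm_le
  obtain ⟨L, hL⟩ := hv.exists_norm_sub_le
  obtain ⟨M, hM⟩ := hw.exists_norm_sub_le
  refine ⟨?_, ⟨A * B, ?_⟩, ⟨L * B + A * M, ?_⟩,
    fun p => (hv.hasDerivAt p.1).mul (hw.hasDerivAt p.2)⟩
  · filter_upwards [hv.aestronglyMeasurable, hw.aestronglyMeasurable] with t hvt hwt
    exact hvt.comp_fst.mul hwt.comp_snd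
  · filter_upwards [hA, hB] with t hvt hwt p
    exact norm_mul_le_of_le (hvt p.1) (hwt p.2)
  · filter_upwards [hB, hL, hM] with t hwt hvL hwM p
    calc ‖v t p.1 * w t p.2 - v t₀ p.1 * w t₀ p.2‖
        = ‖(v t p.1 - v t₀ p.1) * w t p.2 + v t₀ p.1 * (w t p.2 - w t₀ p.2)‖ := by ring_nf
      _ ≤ L * ‖t - t₀‖ * B + A * (M * ‖t - t₀‖) :=
        norm_add_le_of_le (norm_mul_le_of_le (hvL p.1) (hwt p.2))
          (norm_mul_le_of_le (hA.self_of_nhds p.1) (hwM p.2))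
      _ = (L * B + A * M) * ‖t - t₀‖ := by ring

theorem hasDerivAt_integral_integral_mul [SFinite μ] [SFinite ν]
    (hv : HasBddLipDerivAt μ v v' t₀) (hw : HasBddLipDerivAt ν w w' t₀) {K : α → β → ℝ}
    (hK : Integrable (fun p : α × β => K p.1 p.2) (μ.prod ν)) :
    HasDerivAt (fun t => ∫ x, ∫ y, K x y * (v t x * w t y) ∂ν ∂μ)
      (∫ x, ∫ y, K x y * (v' x * w t₀ y + v t₀ x * w' y) ∂ν ∂μ) t₀ := by
  obtain ⟨hint, hderiv⟩ := (hv.mul_prod hw).hasDerivAt_integral_mul hK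
  rw [integral_integral hint]
  refine hderiv.congr_of_eventuallyEq ?_
  filter_upwards [(hv.mul_prod hw).eventually_integrable_mul hK] with t ht
  exact integral_integral ht

theorem hasDerivAt_integral_integral_mul_self_of_symm [SFinite μ] (hv : HasBddLipDerivAt μ v v' t₀)
    {K : α → α → ℝ} (hK : Integrable (fun p : α × α => K p.1 p.2) (μ.prod μ))
    (hK_symm : ∀ᵐ p ∂μ.prod μ, K p.1 p.2 = K p.2 p.1) :
    HasDerivAt (fun t => ∫ x, ∫ y, K x y * (v t x * v t y) ∂μ ∂μ)
      (2 * ∫ x, ∫ y, K x y * (v t₀ y * v' x) ∂μ ∂μ) t₀ := by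
  obtain ⟨C, hC⟩ := hv.exists_norm_le
  have hconst : HasBddLipDerivAt μ (fun _ => v t₀) 0 t₀ :=
    hasBddLipDerivAt_const hv.aestronglyMeasurable.self_of_nhds hC.self_of_nhds
  have hfst : Integrable (fun p : α × α => K p.1 p.2 * (v' p.1 * v t₀ p.2)) (μ.prod μ) := by
    simpa using ((hv.mul_prod hconst).hasDerivAt_integral_mul hK).1
  have hsnd : Integrable (fun p : α × α => K p.1 p.2 * (v t₀ p.1 * v' p.2)) (μ.prod μ) := by
    simpa using ((hconst.mul_prod hv).hasDerivAt_integral_mul hK).1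
  have hsum := ((hv.mul_prod hv).hasDerivAt_integral_mul hK).1
  convert hv.hasDerivAt_integral_integral_mul hv hK using 1
  calc 2 * ∫ x, ∫ y, K x y * (v t₀ y * v' x) ∂μ ∂μ
      = 2 * ∫ p, K p.1 p.2 * (v' p.1 * v t₀ p.2) ∂μ.prod μ := by
        simp only [mul_comm (v t₀ _) (v' _)]
        rw [integral_integral hfst]
    _ = ∫ p, (K p.1 p.2 * (v' p.1 * v t₀ p.2) + K p.1 p.2 * (v t₀ p.1 * v' p.2)) ∂μ.prod μ := by
        rw [integral_add hfst hsnd, integral_prod_symm_kernel_mul hK_symm (v t₀), two_mul]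
    _ = ∫ x, ∫ y, K x y * (v' x * v t₀ y + v t₀ x * v' y) ∂μ ∂μ := by
        rw [integral_integral hsum]
        simp only [mul_add]

end HasBddLipDerivAt

end BoundedLipschitzCurves

lemma measurable_invFun_of_continuous_of_bijective {X Y : Type*} [Nonempty X]
    [TopologicalSpace X] [PolishSpace X] [MeasurableSpace X] [BorelSpace X]
    [TopologicalSpace Y] [T2Space Y] [MeasurableSpace Y] [BorelSpace Y]
    {f : X → Y} (hf : Continuous f) (hbij : Function.Bijective f) :
    Measurable (Function.invFun f) := by
  rw [← (hf.measurableEmbedding hbij.injective).measurable_comp_iff,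
    (Function.rightInverse_invFun hbij.surjective).comp_eq_id]
  exact measurable_id

section NearIdentityDeformation

variable {E : Type*} [NormedAddCommGroup E] [NormedSpace ℝ E] {p w : ℝ → E} {x v : E} {C : ℝ}

lemma norm_sub_le_of_add_smul_eq {y : E} {t : ℝ} (h : y + t • v = x) (hv : ‖v‖ ≤ C) :
    ‖y - x‖ ≤ C * ‖t‖ := by
  rw [← h, sub_add_cancel_left, norm_neg, norm_smul, mul_comm]
  gcongr

lemma tendsto_of_add_smul_eq (h : ∀ᶠ t in 𝓝 0, p t + t • w t = x)
    (hw : ∀ᶠ t in 𝓝 0, ‖w t‖ ≤ C) : Tendsto p (𝓝 0) (𝓝 x) := by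
  have hle : ∀ᶠ t in 𝓝 0, ‖p t - x‖ ≤ C * ‖t‖ := by
    filter_upwards [h, hw] with t using norm_sub_le_of_add_smul_eq
  have hlim : Tendsto (fun t : ℝ => C * ‖t‖) (𝓝 0) (𝓝 0) :=
    Continuous.tendsto' (by fun_prop) 0 0 (by simp)
  exact tendsto_iff_norm_sub_tendsto_zero.2
    (squeeze_zero' (.of_forall fun _ => norm_nonneg _) hle hlim)

lemma hasDerivAt_of_add_smul_eq (h : ∀ᶠ t in 𝓝 0, p t + t • w t = x)
    (hw : Tendsto w (𝓝[≠] 0) (𝓝 v)) : HasDerivAt p (-v) 0 := by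
  have hp₀ : p 0 = x := by simpa using h.self_of_nhds
  refine hasDerivAt_iff_tendsto_slope.2 (hw.neg.congr' ?_)
  filter_upwards [nhdsWithin_le_nhds h, self_mem_nhdsWithin] with t ht ht₀
  rw [slope_def_module, hp₀, ← ht, sub_add_cancel_left, sub_zero, smul_neg,
    inv_smul_smul₀ ht₀]

variable [MeasurableSpace E] [BorelSpace E] {u : E → ℝ}

theorem hasBddLipDerivAt_comp {α : Type*} [MeasurableSpace α] (μ : Measure α)
    (hu : Differentiable ℝ u) (hu_bdd : ∃ A, ∀ x, ‖u x‖ ≤ A)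
    (hu' : ∃ A, ∀ x, ‖fderiv ℝ u x‖ ≤ A) {Ψ : ℝ → α → E} {Ψ' : α → E} {t₀ : ℝ}
    (hΨ_meas : ∀ᶠ t in 𝓝 t₀, Measurable (Ψ t))
    (hΨ_lip : ∃ L, ∀ᶠ t in 𝓝 t₀, ∀ a, ‖Ψ t a - Ψ t₀ a‖ ≤ L * ‖t - t₀‖)
    (hΨ' : ∀ a, HasDerivAt (fun t => Ψ t a) (Ψ' a) t₀) :
    HasBddLipDerivAt μ (fun t a => u (Ψ t a)) (fun a => fderiv ℝ u (Ψ t₀ a) (Ψ' a)) t₀ := by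
  obtain ⟨A, hA⟩ := hu_bdd
  obtain ⟨A', hA'⟩ := hu'
  obtain ⟨L, hL⟩ := hΨ_lip
  refine ⟨?_, ⟨A, .of_forall fun t a => hA _⟩, ⟨A' * L, ?_⟩,
    fun a => (hu _).hasFDerivAt.comp_hasDerivAt t₀ (hΨ' a)⟩
  · filter_upwards [hΨ_meas] with t ht
    exact (hu.continuous.measurable.comp ht).aestronglyMeasurable
  · filter_upwards [hL] with t ht a
    calc ‖u (Ψ t a) - u (Ψ t₀ a)‖ ≤ A' * ‖Ψ t a - Ψ t₀ a‖ :=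
          convex_univ.norm_image_sub_le_of_norm_fderiv_le (fun z _ => hu z)
            (fun z _ => hA' z) (Set.mem_univ _) (Set.mem_univ _)
      _ ≤ A' * (L * ‖t - t₀‖) :=
          mul_le_mul_of_nonneg_left (ht a) ((norm_nonneg _).trans (hA' (Ψ t₀ a)))
      _ = A' * L * ‖t - t₀‖ := (mul_assoc ..).symm

variable [CompleteSpace E] [SecondCountableTopology E]

theorem hasBddLipDerivAt_comp_invFun (μ : Measure E)
    (hu : Differentiable ℝ u) (hu_bdd : ∃ A, ∀ x, ‖u x‖ ≤ A)
    (hu' : ∃ A, ∀ x, ‖fderiv ℝ u x‖ ≤ A) {Φ V : ℝ → E → E}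
    (hΦ : ∀ t x, Φ t x = x + t • V t x) (hbij : ∀ᶠ t in 𝓝 0, Function.Bijective (Φ t))
    (hV_cont : ∀ᶠ t in 𝓝 0, Continuous (V t)) (hV_bdd : ∃ C, ∀ᶠ t in 𝓝 0, ∀ x, ‖V t x‖ ≤ C)
    (hV : ∀ x, ContinuousAt (fun q : ℝ × E => V q.1 q.2) (0, x)) :
    HasBddLipDerivAt μ (fun t x => u (Function.invFun (Φ t) x))
      (fun x => -fderiv ℝ u x (V 0 x)) 0 := by
  obtain ⟨C, hC⟩ := hV_bdd
  set Ψ : ℝ → E → E := fun t => Function.invFun (Φ t)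
  have hΨ : ∀ᶠ t in 𝓝 0, ∀ x, Ψ t x + t • V t (Ψ t x) = x := by
    filter_upwards [hbij] with t ht x
    rw [← hΦ]
    exact Function.rightInverse_invFun ht.surjective x
  have hΨ_zero (x : E) : Ψ 0 x = x := by simpa using hΨ.self_of_nhds x
  have hΨ_meas : ∀ᶠ t in 𝓝 0, Measurable (Ψ t) := by
    filter_upwards [hbij, hV_cont] with t ht hVt
    have hΦ_cont : Continuous (Φ t) := by
      rw [funext (hΦ t)]
      fun_prop
    exact measurable_invFun_of_continuous_of_bijective hΦ_cont ht
  have hΨ_lip : ∀ᶠ t in 𝓝 0, ∀ x, ‖Ψ t x - Ψ 0 x‖ ≤ C * ‖t - 0‖ := by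
    filter_upwards [hΨ, hC] with t ht hCt x
    simpa only [hΨ_zero, sub_zero] using norm_sub_le_of_add_smul_eq (ht x) (hCt _)
  have hΨ' (x : E) : HasDerivAt (fun t => Ψ t x) (-V 0 x) 0 := by
    have hΨx : ∀ᶠ t in 𝓝 0, Ψ t x + t • V t (Ψ t x) = x := hΨ.mono fun t ht => ht x
    have hΨ_tendsto : Tendsto (fun t => Ψ t x) (𝓝 0) (𝓝 x) :=
      tendsto_of_add_smul_eq hΨx (hC.mono fun t ht => ht _)
    exact hasDerivAt_of_add_smul_eq hΨx
      (((hV x).tendsto.comp (tendsto_id.prodMk_nhds hΨ_tendsto)).mono_left nhdsWithin_le_nhds)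
  simpa only [hΨ_zero, map_neg] using
    hasBddLipDerivAt_comp μ hu hu_bdd hu' hΨ_meas ⟨C, hΨ_lip⟩ hΨ'

theorem first_inner_variation_nonlocal_general
    {μ : Measure E} [SFinite μ] {G : E → E → ℝ}
    (hG : Integrable (fun p : E × E => G p.1 p.2) (μ.prod μ))
    (hG_symm : ∀ᵐ p ∂μ.prod μ, G p.1 p.2 = G p.2 p.1)
    (hu : Differentiable ℝ u) (hu_bdd : ∃ A, ∀ x, ‖u x‖ ≤ A)
    (hu' : ∃ A, ∀ x, ‖fderiv ℝ u x‖ ≤ A) {η ζ : E → E}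
    (hη : Continuous η) (hη_bdd : ∃ K, ∀ x, ‖η x‖ ≤ K)
    (hζ : Continuous ζ) (hζ_bdd : ∃ Z, ∀ x, ‖ζ x‖ ≤ Z) {Φ : ℝ → E → E}
    (hΦ : ∀ t x, Φ t x = x + t • η x + (t ^ 2 / 2) • ζ x)
    (hbij : ∀ᶠ t in 𝓝 0, Function.Bijective (Φ t)) :
    HasDerivAt
      (fun t => ∫ x, ∫ y,
        G x y * (u (Function.invFun (Φ t) x) * u (Function.invFun (Φ t) y)) ∂μ ∂μ)
      (-2 * ∫ x, ∫ y, G x y * (u y * fderiv ℝ u x (η x)) ∂μ ∂μ) 0 := by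
  obtain ⟨K, hK⟩ := hη_bdd
  obtain ⟨Z, hZ⟩ := hζ_bdd
  have hinv_zero (x : E) : Function.invFun (Φ 0) x = x := by
    simpa [hΦ] using Function.rightInverse_invFun hbij.self_of_nhds.surjective x
  have hV_bdd : ∀ᶠ t : ℝ in 𝓝 0, ∀ x, ‖η x + (t / 2) • ζ x‖ ≤ K + 1 * Z := by
    have ht_half : ∀ᶠ t : ℝ in 𝓝 0, ‖t / 2‖ < 1 :=
      ContinuousAt.eventually_lt (by fun_prop) continuousAt_const (by simp)
    filter_upwards [ht_half] with t ht x
    exact norm_add_le_of_le (hK x) ((norm_smul_le _ _).trans (by gcongr; exact hZ x))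
  have hcurve := hasBddLipDerivAt_comp_invFun μ hu hu_bdd hu'
    (V := fun t x => η x + (t / 2) • ζ x) (fun t x => by rw [hΦ]; module) hbij
    (.of_forall fun t => by fun_prop) ⟨_, hV_bdd⟩ (fun x => by fun_prop)
  simpa [hinv_zero, integral_neg] using
    hcurve.hasDerivAt_integral_integral_mul_self_of_symm hG hG_symm

end NearIdentityDeformation

namespace BddUpTo

variable {N n : ℕ} {E : Type*} [NormedAddCommGroup E] [NormedSpace ℝ E] {f : (Fin N → ℝ) → E}

lemma exists_norm_le (h : BddUpTo n f) : ∃ C, ∀ x, ‖f x‖ ≤ C := by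
  simpa only [norm_iteratedFDeriv_zero] using h 0 n.zero_le

lemma exists_norm_fderiv_le (h : BddUpTo n f) (hn : 1 ≤ n) : ∃ C, ∀ x, ‖fderiv ℝ f x‖ ≤ C := by
  simpa only [norm_iteratedFDeriv_one] using h 1 hn

end BddUpTo

lemma sum_pdv_mul {N : ℕ} (u : (Fin N → ℝ) → ℝ) (x w : Fin N → ℝ) :
    ∑ i, pdv u i x * w i = fderiv ℝ u x w := by
  conv_rhs => rw [← (Pi.basisFun ℝ (Fin N)).sum_repr w, map_sum]
  simp [pdv, mul_comm]

/-- First inner variation of the nonlocal energy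
`B(w) := ∫_Ω∫_Ω G(x,y) w(x) w(y)`: with `u_t := u ∘ Φ_t⁻¹`,
`B(t) := ∫_Ω∫_Ω G(x,y) u_t(x) u_t(y)` is differentiable at `t = 0` with
`B'(0) = −2 ∫_Ω∫_Ω G(x,y) u(y) (∇u(x)·η(x))`. -/
theorem first_inner_variation_nonlocal
    (N : ℕ) (Ω : Set (Fin N → ℝ)) (hΩo : IsOpen Ω) (hΩb : Bornology.IsBounded Ω)
    (G : (Fin N → ℝ) → (Fin N → ℝ) → ℝ)
    (hGint : Integrable (fun p : (Fin N → ℝ) × (Fin N → ℝ) => G p.1 p.2)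
      ((volume.restrict Ω).prod (volume.restrict Ω)))
    (hGsym : ∀ x y, G x y = G y x)
    (u : (Fin N → ℝ) → ℝ) (hu : ContDiff ℝ 3 u) (hub : BddUpTo 3 u)
    (η ζ : (Fin N → ℝ) → (Fin N → ℝ))
    (hη : ContDiff ℝ 3 η) (hηb : BddUpTo 3 η)
    (hζ : ContDiff ℝ 3 ζ) (hζb : BddUpTo 3 ζ)
    (Φ : ℝ → (Fin N → ℝ) → (Fin N → ℝ))
    (hΦ : ∀ t x, Φ t x = x + t • η x + (t ^ 2 / 2) • ζ x)
    (τ : ℝ) (hτ : 0 < τ)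
    (hbij : ∀ t : ℝ, |t| < τ → Function.Bijective (Φ t)) :
    HasDerivAt
      (fun t : ℝ => ∫ x in Ω, ∫ y in Ω,
        G x y * (u (Function.invFun (Φ t) x) * u (Function.invFun (Φ t) y)))
      (-2 * ∫ x in Ω, ∫ y in Ω,
        G x y * (u y * (∑ i, pdv u i x * η x i))) 0 := by
  simp only [sum_pdv_mul]
  exact first_inner_variation_nonlocal_general hGint (.of_forall fun p => hGsym p.1 p.2)
    (hu.differentiable (by norm_num)) hub.exists_norm_le (hub.exists_norm_fderiv_le (by norm_num))
    hη.continuous hηb.exists_norm_le hζ.continuous hζb.exists_norm_le hΦ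
    (by filter_upwards [eventually_abs_sub_lt 0 hτ] with t ht using hbij t (by simpa using ht))

end PaperAC
end

section
/- Let Ω ⊂ ℝ^N be a measurable set of finite Lebesgue measure and define Φ(a) := ∫_0^a |s² − 1| ds for a ∈ ℝ. Let w_k : Ω → ℝ be measurable functions with ∫_Ω (w_k² − 1)² dx < ∞ for each k, and let w : Ω → ℝ be measurable with |w(x)| = 1 for a.e. x. Assume w_k → w in L¹(Ω) and ∫_{{x ∈ Ω : |w_k(x)| > 1}} (w_k(x)² − 1)² dx → 0 as k → ∞. Then Φ∘w_k → Φ∘w in L¹(Ω), i.e. ∫_Ω |Φ(w_k(x)) − Φ(w(x))| dx → 0. -/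
open Filter MeasureTheory Topology
open scoped RealInnerProductSpace

namespace PaperAC

/-!
On `[-1, 1]` the function `Φ` is `1`-Lipschitz, while for `|a| > 1` truncating `a` to `±1` changes
`Φ` by at most `(a² − 1)²`. Truncation does not increase the distance to a value in `[-1, 1]`, so
`|Φ(a) − Φ(b)| ≤ |a − b| + (a² − 1)² 1_{|a| > 1}` whenever `|b| ≤ 1`; integrate this bound.
-/

lemma abs_PhiAC_sub_le_mul {C x y : ℝ} (h : ∀ s ∈ Set.uIcc y x, |s ^ 2 - 1| ≤ C) :
    |PhiAC x - PhiAC y| ≤ C * |x - y| := by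
  have hcont : Continuous fun s : ℝ => |s ^ 2 - 1| := by fun_prop
  have hsub : PhiAC x - PhiAC y = ∫ s in y..x, |s ^ 2 - 1| :=
    intervalIntegral.integral_interval_sub_left (hcont.intervalIntegrable _ _)
      (hcont.intervalIntegrable _ _)
  rw [hsub, ← Real.norm_eq_abs]
  refine intervalIntegral.norm_integral_le_of_norm_le_const fun s hs => ?_
  simpa only [Real.norm_eq_abs, abs_abs] using h s (Set.uIoc_subset_uIcc hs)

lemma PhiAC_neg (a : ℝ) : PhiAC (-a) = -PhiAC a := by
  have hreflect := intervalIntegral.integral_comp_neg (a := 0) (b := -a) fun s : ℝ => |s ^ 2 - 1|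
  simp only [neg_sq, neg_neg, neg_zero] at hreflect
  rw [PhiAC, hreflect, intervalIntegral.integral_symm, PhiAC]

lemma abs_PhiAC_sub_le_of_abs_le_one {x y : ℝ} (hx : |x| ≤ 1) (hy : |y| ≤ 1) :
    |PhiAC x - PhiAC y| ≤ |x - y| := by
  rw [← one_mul |x - y|]
  refine abs_PhiAC_sub_le_mul fun s hs => ?_
  have hs_one : |s| ≤ 1 := abs_le.2 (Set.uIcc_subset_Icc (abs_le.1 hy) (abs_le.1 hx) hs)
  have hs_sq : s ^ 2 ≤ 1 := (sq_le_one_iff_abs_le_one s).2 hs_one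
  exact abs_le.2 ⟨by linarith [sq_nonneg s], by linarith⟩

lemma abs_PhiAC_sub_PhiAC_one_le {a : ℝ} (ha : 1 ≤ a) :
    |PhiAC a - PhiAC 1| ≤ (a ^ 2 - 1) ^ 2 := by
  have hbound : ∀ s ∈ Set.uIcc 1 a, |s ^ 2 - 1| ≤ a ^ 2 - 1 := fun s hs => by
    rw [Set.uIcc_of_le ha] at hs
    rw [abs_of_nonneg (by nlinarith [hs.1])]
    gcongr
    · linarith [hs.1]
    · exact hs.2
  calc |PhiAC a - PhiAC 1| ≤ (a ^ 2 - 1) * |a - 1| := abs_PhiAC_sub_le_mul hbound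
    _ = (a ^ 2 - 1) * (a - 1) := by rw [abs_of_nonneg (sub_nonneg.2 ha)]
    _ ≤ (a ^ 2 - 1) * (a ^ 2 - 1) := by gcongr <;> nlinarith
    _ = (a ^ 2 - 1) ^ 2 := by ring

lemma abs_PhiAC_sub_le_of_one_le {a b : ℝ} (ha : 1 ≤ a) (hb : |b| ≤ 1) :
    |PhiAC a - PhiAC b| ≤ |a - b| + (a ^ 2 - 1) ^ 2 := by
  have hb_one : b ≤ 1 := (abs_le.1 hb).2
  have htrunc : |1 - b| ≤ |a - b| :=
    abs_le_abs_of_nonneg (by linarith) (by linarith)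
  calc |PhiAC a - PhiAC b|
      ≤ |PhiAC a - PhiAC 1| + |PhiAC 1 - PhiAC b| := abs_sub_le _ _ _
    _ ≤ (a ^ 2 - 1) ^ 2 + |1 - b| :=
        add_le_add (abs_PhiAC_sub_PhiAC_one_le ha)
          (abs_PhiAC_sub_le_of_abs_le_one abs_one.le hb)
    _ ≤ |a - b| + (a ^ 2 - 1) ^ 2 := by linarith

lemma abs_PhiAC_sub_le_add_indicator (a : ℝ) {b : ℝ} (hb : |b| ≤ 1) :
    |PhiAC a - PhiAC b| ≤ |a - b| + {t : ℝ | 1 < |t|}.indicator (fun t => (t ^ 2 - 1) ^ 2) a := by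
  by_cases ha : a ∈ {t : ℝ | 1 < |t|}
  · rw [Set.indicator_of_mem ha]
    rcases lt_abs.1 (Set.mem_ofPred.1 ha) with hpos | hneg
    · exact abs_PhiAC_sub_le_of_one_le hpos.le hb
    · have hreflected := abs_PhiAC_sub_le_of_one_le hneg.le ((abs_neg b).trans_le hb)
      rwa [PhiAC_neg, PhiAC_neg, neg_sub_neg, neg_sub_neg, abs_sub_comm, abs_sub_comm b,
        neg_sq] at hreflected
  · rw [Set.indicator_of_notMem ha, add_zero]
    exact abs_PhiAC_sub_le_of_abs_le_one (not_lt.1 ha) hb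

section Integral

variable {α : Type*} [MeasurableSpace α] {μ : Measure α}

lemma integral_abs_PhiAC_sub_le {u v : α → ℝ} (hu : AEMeasurable u μ)
    (hv : ∀ᵐ x ∂μ, |v x| ≤ 1) (huv : Integrable (fun x => u x - v x) μ)
    (hexcess : IntegrableOn (fun x => (u x ^ 2 - 1) ^ 2) {x | 1 < |u x|} μ) :
    ∫ x, |PhiAC (u x) - PhiAC (v x)| ∂μ
      ≤ ∫ x, |u x - v x| ∂μ + ∫ x in {x | 1 < |u x|}, (u x ^ 2 - 1) ^ 2 ∂μ := by
  have hS : NullMeasurableSet {x | 1 < |u x|} μ := nullMeasurableSet_lt aemeasurable_const hu.abs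
  have hind : Integrable ({x | 1 < |u x|}.indicator fun x => (u x ^ 2 - 1) ^ 2) μ :=
    hexcess.integrable_indicator₀ hS
  rw [← integral_indicator₀ hS, ← integral_add huv.abs hind]
  refine integral_mono_of_nonneg (ae_of_all μ fun _ => abs_nonneg _) (huv.abs.add hind) ?_
  filter_upwards [hv] with x hx
  exact abs_PhiAC_sub_le_add_indicator (u x) hx

theorem truncation_L1_convergence_general {ι : Type*} {l : Filter ι} {w : ι → α → ℝ} {w0 : α → ℝ}
    (hw : ∀ k, AEMeasurable (w k) μ) (hw0 : ∀ᵐ x ∂μ, |w0 x| ≤ 1)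
    (hint : ∀ k, Integrable (fun x => w k x - w0 x) μ)
    (hexcess : ∀ k, IntegrableOn (fun x => (w k x ^ 2 - 1) ^ 2) {x | 1 < |w k x|} μ)
    (hL1 : Tendsto (fun k => ∫ x, |w k x - w0 x| ∂μ) l (𝓝 0))
    (htrunc : Tendsto (fun k => ∫ x in {x | 1 < |w k x|}, (w k x ^ 2 - 1) ^ 2 ∂μ) l (𝓝 0)) :
    Tendsto (fun k => ∫ x, |PhiAC (w k x) - PhiAC (w0 x)| ∂μ) l (𝓝 0) :=
  squeeze_zero (fun _ => integral_nonneg fun _ => abs_nonneg _)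
    (fun k => integral_abs_PhiAC_sub_le (hw k) hw0 (hint k) (hexcess k))
    (by simpa only [add_zero] using hL1.add htrunc)

end Integral

/-- Truncation lemma: if `w_k → w` in `L¹(Ω)`, `|w| = 1` a.e., and the
energy excess `∫_{|w_k|>1} (w_k² − 1)²` vanishes, then `Φ∘w_k → Φ∘w` in `L¹(Ω)`, where
`Φ(a) := ∫_0^a |s² − 1| ds`. -/
theorem truncation_L1_convergence
    (N : ℕ) (Ω : Set (Fin N → ℝ)) (hΩm : MeasurableSet Ω) (hΩf : volume Ω < ⊤)
    (w : ℕ → (Fin N → ℝ) → ℝ) (hwm : ∀ k, Measurable (w k))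
    (hw4 : ∀ k, IntegrableOn (fun x => (w k x ^ 2 - 1) ^ 2) Ω)
    (w0 : (Fin N → ℝ) → ℝ) (hw0m : Measurable w0)
    (hw01 : ∀ᵐ x ∂(volume.restrict Ω), |w0 x| = 1)
    (hwint : ∀ k, IntegrableOn (w k) Ω)
    (hL1 : Tendsto (fun k => ∫ x in Ω, |w k x - w0 x|) atTop (𝓝 0))
    (htrunc : Tendsto
      (fun k => ∫ x in Ω ∩ {x | 1 < |w k x|}, (w k x ^ 2 - 1) ^ 2) atTop (𝓝 0)) :
    Tendsto (fun k => ∫ x in Ω, |PhiAC (w k x) - PhiAC (w0 x)|) atTop (𝓝 0) := by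
  have hw0int : IntegrableOn w0 Ω :=
    .of_bound hΩf hw0m.aestronglyMeasurable 1 (hw01.mono fun _ hx => hx.le)
  refine truncation_L1_convergence_general (fun k => (hwm k).aemeasurable)
    (hw01.mono fun _ hx => hx.le) (fun k => (hwint k).sub hw0int)
    (fun k => (hw4 k).integrable.integrableOn) hL1 ?_
  simpa only [Measure.restrict_restrict (measurableSet_lt measurable_const (hwm _).abs),
    Set.inter_comm] using htrunc

end PaperAC
end

section
/- Let E ⊂ ℝ^N be a bounded measurable set and let η : ℝ^N → ℝ^N be bounded and of class C³ with bounded derivatives. Define W := (η·∇)η − (div η)·η and Φ_t(x) := x + t·η(x) + (t²/2)·W(x), and set V(t) := ∫_E det ∇Φ_t(x) dx, where ∇Φ_t(x) is the N×N matrix with entries δ_{ij} + t ∂η^i/∂x_j + (t²/2) ∂W^i/∂x_j. Then V is twice differentiable at t = 0 with V(0) = |E| (the Lebesgue measure of E), V'(0) = ∫_E div η dx, and V''(0) = 0. -/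
open Filter MeasureTheory Topology
open scoped RealInnerProductSpace

namespace PaperAC

/-!
The integrand `det ∇Φ_t(x)` is a polynomial in `t` whose coefficients are continuous functions of
`x`, that is, a polynomial over the ring of continuous functions, and integration over the bounded
set `E` is a linear functional on that ring. Since a linear functional is applied coefficientwise,
`V` may be differentiated by differentiating the polynomial formally, with no domination argument.
Jacobi's formula then gives `∫_E (div W + (div η)² - tr (∇η)²)` for the second derivative at `0`,
and the integrand vanishes: by symmetry of second derivatives,
`div ((η·∇)η) = tr (∇η)² + η·∇(div η)`, while `div ((div η) η) = (div η)² + η·∇(div η)`.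
-/

section PolynomialMatrix

open Polynomial

variable {R n : Type*} [CommRing R]

section Path

variable [DecidableEq n]

/-- The path of matrices `1 + X A + X² B`, as a matrix of polynomials, so that its
determinant can be differentiated formally. The gradient of the deformation is the case `A = ∇η`,
`B = ∇W / 2`. -/
noncomputable def quadraticPath (A B : Matrix n n R) : Matrix n n R[X] :=
  1 + (X : R[X]) • A.map C + (X : R[X]) ^ 2 • B.map C

theorem map_eval_quadraticPath (A B : Matrix n n R) (r : R) :
    (quadraticPath A B).map (evalRingHom r) = 1 + r • A + r ^ 2 • B := by
  ext i j
  by_cases hij : i = j <;> simp [quadraticPath, hij] <;> ring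

theorem map_eval_zero_quadraticPath (A B : Matrix n n R) :
    (quadraticPath A B).map (evalRingHom 0) = 1 := by
  simp only [map_eval_quadraticPath, zero_smul, add_zero, zero_pow two_ne_zero]

theorem map_eval_derivative_quadraticPath (A B : Matrix n n R) :
    ((quadraticPath A B).map derivative).map (evalRingHom 0) = A := by
  ext i j
  by_cases hij : i = j <;> simp [quadraticPath, hij]

theorem map_eval_derivative_derivative_quadraticPath (A B : Matrix n n R) :
    (((quadraticPath A B).map derivative).map derivative).map (evalRingHom 0) = (2 : R) • B := by
  ext i j
  by_cases hij : i = j <;> simp [quadraticPath, hij] <;> ring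

end Path

variable [Fintype n]

theorem map_derivative_matrix_mul (M M' : Matrix n n R[X]) :
    (M * M').map derivative = M.map derivative * M' + M * M'.map derivative := by
  ext1 i j
  simp only [Matrix.map_apply, Matrix.add_apply, Matrix.mul_apply, derivative_sum,
    derivative_mul, Finset.sum_add_distrib]

variable [DecidableEq n]

theorem derivative_det_eq_sum_updateCol (M : Matrix n n R[X]) :
    derivative M.det = ∑ j, (M.updateCol j fun i => derivative (M i j)).det := by
  simp only [Matrix.det_apply, derivative_sum, derivative_smul, derivative_prod_finset]
  rw [Finset.sum_comm]
  refine Finset.sum_congr rfl fun σ _ => ?_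
  rw [← Finset.smul_sum]
  congr 1
  refine Finset.sum_congr rfl fun j _ => ?_
  rw [← Finset.prod_erase_mul _ _ (Finset.mem_univ j), Matrix.updateCol_self]
  congr 1
  exact Finset.prod_congr rfl fun i hi => by rw [Matrix.updateCol_ne (Finset.ne_of_mem_erase hi)]

theorem derivative_det (M : Matrix n n R[X]) :
    derivative M.det = (M.adjugate * M.map derivative).trace := by
  rw [derivative_det_eq_sum_updateCol]
  refine Finset.sum_congr rfl fun j _ => ?_
  rw [← Matrix.cramer_apply, Matrix.cramer_eq_adjugate_mulVec]
  rfl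

section MapEqOne

variable {S : Type*} [CommRing S] {f : R[X] →+* S} {M : Matrix n n R[X]}

theorem map_adjugate_of_map_eq_one (hM : M.map f = 1) : M.adjugate.map f = 1 := by
  have h := f.map_adjugate M
  rwa [RingHom.mapMatrix_apply, RingHom.mapMatrix_apply, hM, Matrix.adjugate_one] at h

theorem map_derivative_det_of_map_eq_one (hM : M.map f = 1) :
    f (derivative M.det) = ((M.map derivative).map f).trace := by
  rw [derivative_det, AddMonoidHom.map_trace, Matrix.map_mul, map_adjugate_of_map_eq_one hM,
    one_mul]

-- Differentiating `M * adj M = det M • 1` determines `(adj M)'` where `M = 1`.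
theorem map_derivative_adjugate_of_map_eq_one (hM : M.map f = 1) :
    (M.adjugate.map derivative).map f =
      ((M.map derivative).map f).trace • 1 - (M.map derivative).map f := by
  have h : ((M * M.adjugate).map derivative).map f = f (derivative M.det) • 1 := by
    rw [Matrix.mul_adjugate]
    ext i j
    by_cases hij : i = j <;> simp [hij]
  rw [map_derivative_matrix_mul, Matrix.map_add _ (map_add f), Matrix.map_mul, Matrix.map_mul,
    map_adjugate_of_map_eq_one hM, hM, mul_one, one_mul,
    map_derivative_det_of_map_eq_one hM] at h
  exact eq_sub_of_add_eq' h

theorem map_derivative_derivative_det_of_map_eq_one (hM : M.map f = 1) :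
    f (derivative (derivative M.det)) =
      (((M.map derivative).map derivative).map f).trace + ((M.map derivative).map f).trace ^ 2
        - ((M.map derivative).map f * (M.map derivative).map f).trace := by
  rw [derivative_det, AddMonoidHom.map_trace derivative, AddMonoidHom.map_trace f,
    map_derivative_matrix_mul, Matrix.map_add _ (map_add f), Matrix.map_mul, Matrix.map_mul,
    map_derivative_adjugate_of_map_eq_one hM, map_adjugate_of_map_eq_one hM, one_mul,
    Matrix.trace_add, sub_mul, Matrix.trace_sub, Matrix.smul_mul, one_mul, Matrix.trace_smul,
    smul_eq_mul]
  ring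

end MapEqOne

theorem eval_det_quadraticPath (A B : Matrix n n R) (r : R) :
    (quadraticPath A B).det.eval r = (1 + r • A + r ^ 2 • B).det := by
  rw [← map_eval_quadraticPath]
  exact (evalRingHom r).map_det _

theorem eval_det_quadraticPath_apply {X : Type*} [TopologicalSpace X]
    (A B : Matrix n n C(X, ℝ)) (t : ℝ) (x : X) :
    (quadraticPath A B).det.eval (algebraMap ℝ C(X, ℝ) t) x =
      (1 + t • A.map (· x) + t ^ 2 • B.map (· x)).det := by
  rw [eval_det_quadraticPath]
  refine ((ContinuousMap.evalAlgHom ℝ ℝ x).map_det _).trans (congrArg Matrix.det ?_)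
  have heval (f : C(X, ℝ)) : ContinuousMap.evalAlgHom ℝ ℝ x f = f x := rfl
  ext i j
  by_cases hij : i = j <;> simp [hij, heval]

theorem eval_derivative_det_quadraticPath (A B : Matrix n n R) :
    (derivative (quadraticPath A B).det).eval 0 = A.trace := by
  have h := map_derivative_det_of_map_eq_one (map_eval_zero_quadraticPath A B)
  rwa [map_eval_derivative_quadraticPath] at h

theorem eval_derivative_derivative_det_quadraticPath (A B : Matrix n n R) :
    (derivative (derivative (quadraticPath A B).det)).eval 0 =
      2 * B.trace + A.trace ^ 2 - (A * A).trace := by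
  have h := map_derivative_derivative_det_of_map_eq_one (map_eval_zero_quadraticPath A B)
  rwa [map_eval_derivative_quadraticPath, map_eval_derivative_derivative_quadraticPath,
    Matrix.trace_smul] at h

end PolynomialMatrix

section Integration

open Polynomial

theorem hasDerivAt_linearMap_eval {𝕜 R F : Type*} [NontriviallyNormedField 𝕜] [CommRing R]
    [Algebra 𝕜 R] [NormedAddCommGroup F] [NormedSpace 𝕜 F] (L : R →ₗ[𝕜] F) (P : R[X]) (t : 𝕜) :
    HasDerivAt (fun s => L (P.eval (algebraMap 𝕜 R s)))
      (L (P.derivative.eval (algebraMap 𝕜 R t))) t := by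
  induction P using Polynomial.induction_on' with
  | add p q hp hq =>
    simp only [eval_add, map_add]
    exact hp.add hq
  | monomial k a =>
    have hmonomial (s : 𝕜) : L ((monomial k a).eval (algebraMap 𝕜 R s)) = s ^ k • L a := by
      rw [eval_monomial, ← map_pow, mul_comm, ← Algebra.smul_def, map_smul]
    have hderivative : L ((monomial k a).derivative.eval (algebraMap 𝕜 R t)) =
        (k * t ^ (k - 1)) • L a := by
      rw [derivative_monomial, eval_monomial, mul_assoc, mul_comm, ← map_natCast (algebraMap 𝕜 R),
        ← map_pow, ← map_mul, ← Algebra.smul_def, map_smul]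
    simp only [hmonomial, hderivative]
    exact (hasDerivAt_pow k t).smul_const (L a)

variable {α : Type*} [MetricSpace α] [ProperSpace α] [MeasurableSpace α]
  [OpensMeasurableSpace α] {μ : Measure α} [IsFiniteMeasureOnCompacts μ] {E : Set α}

theorem integrableOn_of_isBounded {F : Type*} [NormedAddCommGroup F]
    (hE : Bornology.IsBounded E) {f : α → F} (hf : Continuous f) : IntegrableOn f E μ :=
  (hf.continuousOn.integrableOn_compact hE.isCompact_closure).mono_set subset_closure

/-- Integration over a bounded set, as a linear functional on continuous functions. -/
noncomputable def boundedSetIntegral (μ : Measure α) [IsFiniteMeasureOnCompacts μ]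
    (hE : Bornology.IsBounded E) : C(α, ℝ) →ₗ[ℝ] ℝ where
  toFun f := ∫ x in E, f x ∂μ
  map_add' f g := integral_add (integrableOn_of_isBounded hE f.continuous)
    (integrableOn_of_isBounded hE g.continuous)
  map_smul' c _ := integral_const_mul c _

variable {n : Type*} [Fintype n] [DecidableEq n]

theorem exists_hasDerivAt_setIntegral_det (hE : Bornology.IsBounded E)
    (A B : Matrix n n C(α, ℝ)) :
    ∃ V' : ℝ → ℝ,
      (∀ t, HasDerivAt
        (fun s : ℝ => ∫ x in E, (1 + s • A.map (· x) + s ^ 2 • B.map (· x)).det ∂μ) (V' t) t) ∧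
      V' 0 = ∫ x in E, A.trace x ∂μ ∧
      HasDerivAt V' (∫ x in E, (2 * B.trace x + A.trace x ^ 2 - (A * A).trace x) ∂μ) 0 := by
  let L := boundedSetIntegral μ hE
  let P := (quadraticPath A B).det
  refine ⟨fun t => L (P.derivative.eval (algebraMap ℝ _ t)), fun t => ?_, ?_, ?_⟩
  · simp only [← eval_det_quadraticPath_apply]
    exact hasDerivAt_linearMap_eval L P t
  · calc L (P.derivative.eval (algebraMap ℝ _ 0)) = L A.trace := by
          rw [map_zero, eval_derivative_det_quadraticPath]
      _ = ∫ x in E, A.trace x ∂μ := rfl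
  · have h := hasDerivAt_linearMap_eval L P.derivative 0
    rwa [map_zero, eval_derivative_derivative_det_quadraticPath] at h

end Integration

section VectorField

variable {N : ℕ} {f g : (Fin N → ℝ) → ℝ} {η ξ : (Fin N → ℝ) → (Fin N → ℝ)} {x : Fin N → ℝ}
  {m n : WithTop ℕ∞}

/-- The divergence of a vector field on `ℝ^N`. -/
noncomputable def divf (η : (Fin N → ℝ) → (Fin N → ℝ)) (x : Fin N → ℝ) : ℝ :=
  ∑ i, pdv (fun z => η z i) i x

/-- The Jacobian matrix `∇η` of a vector field, with entries `∂η^i/∂x_j`. -/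
noncomputable def jac (η : (Fin N → ℝ) → (Fin N → ℝ)) (x : Fin N → ℝ) :
    Matrix (Fin N) (Fin N) ℝ :=
  Matrix.of fun i j => pdv (fun z => η z i) j x

/-- The acceleration field `W = (η·∇)η − (div η) η` of the volume-preserving deformation. -/
noncomputable def volAccel (η : (Fin N → ℝ) → (Fin N → ℝ)) (x : Fin N → ℝ) : Fin N → ℝ :=
  fun i => advf η x i - divf η x * η x i

theorem pdv_mul (hf : DifferentiableAt ℝ f x) (hg : DifferentiableAt ℝ g x) (j : Fin N) :
    pdv (fun z => f z * g z) j x = f x * pdv g j x + g x * pdv f j x := by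
  simp [pdv, fderiv_fun_mul hf hg]

theorem pdv_sub (hf : DifferentiableAt ℝ f x) (hg : DifferentiableAt ℝ g x) (j : Fin N) :
    pdv (fun z => f z - g z) j x = pdv f j x - pdv g j x := by
  simp [pdv, fderiv_fun_sub hf hg]

theorem pdv_sum {ι : Type*} {s : Finset ι} {F : ι → (Fin N → ℝ) → ℝ}
    (hF : ∀ i ∈ s, DifferentiableAt ℝ (F i) x) (j : Fin N) :
    pdv (fun z => ∑ i ∈ s, F i z) j x = ∑ i ∈ s, pdv (F i) j x := by
  simp [pdv, fderiv_fun_sum hF]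

theorem pdv_comm (hf : ContDiffAt ℝ 2 f x) (i j : Fin N) :
    pdv (pdv f i) j x = pdv (pdv f j) i x := by
  have hd : DifferentiableAt ℝ (fderiv ℝ f) x :=
    (hf.fderiv_right (m := 1) one_add_one_eq_two.le).differentiableAt one_ne_zero
  have hpdv (i j : Fin N) : pdv (pdv f i) j x =
      fderiv ℝ (fderiv ℝ f) x (Pi.single j 1) (Pi.single i 1) := by
    unfold pdv
    simp [fderiv_clm_apply hd (differentiableAt_const _)]
  rw [hpdv, hpdv]
  exact hf.isSymmSndFDerivAt (by simp) _ _

theorem contDiffAt_pdv (hf : ContDiffAt ℝ n f x) (h : m + 1 ≤ n) (j : Fin N) :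
    ContDiffAt ℝ m (pdv f j) x :=
  (hf.fderiv_right h).clm_apply contDiffAt_const

theorem contDiffAt_divf (hη : ContDiffAt ℝ n η x) (h : m + 1 ≤ n) :
    ContDiffAt ℝ m (divf η) x :=
  ContDiffAt.sum fun i _ => contDiffAt_pdv (contDiffAt_pi.1 hη i) h i

theorem contDiffAt_advf (hη : ContDiffAt ℝ n η x) (h : m + 1 ≤ n) :
    ContDiffAt ℝ m (advf η) x :=
  contDiffAt_pi.2 fun i => ContDiffAt.sum fun j _ =>
    ((contDiffAt_pi.1 hη j).of_le (le_self_add.trans h)).mul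
      (contDiffAt_pdv (contDiffAt_pi.1 hη i) h j)

theorem contDiffAt_volAccel (hη : ContDiffAt ℝ n η x) (h : m + 1 ≤ n) :
    ContDiffAt ℝ m (volAccel η) x :=
  contDiffAt_pi.2 fun i => (contDiffAt_pi.1 (contDiffAt_advf hη h) i).sub
    ((contDiffAt_divf hη h).mul ((contDiffAt_pi.1 hη i).of_le (le_self_add.trans h)))

theorem divf_sub (hη : DifferentiableAt ℝ η x) (hξ : DifferentiableAt ℝ ξ x) :
    divf (fun z i => η z i - ξ z i) x = divf η x - divf ξ x := by
  simp only [divf, pdv_sub (differentiableAt_pi.1 hη _) (differentiableAt_pi.1 hξ _),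
    Finset.sum_sub_distrib]

theorem divf_mul (hf : DifferentiableAt ℝ f x) (hη : DifferentiableAt ℝ η x) :
    divf (fun z i => f z * η z i) x = f x * divf η x + η x ⬝ᵥ grad f x := by
  simp only [divf, pdv_mul hf (differentiableAt_pi.1 hη _), Finset.sum_add_distrib,
    ← Finset.mul_sum, dotProduct, grad]

theorem pdv_divf (hη : ContDiffAt ℝ 2 η x) (j : Fin N) :
    pdv (divf η) j x = ∑ i, pdv (pdv (fun z => η z i) j) i x := by
  have hη' (i : Fin N) : DifferentiableAt ℝ (pdv (fun z => η z i) i) x :=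
    (contDiffAt_pdv (m := 1) (contDiffAt_pi.1 hη i) one_add_one_eq_two.le i).differentiableAt
      one_ne_zero
  exact (pdv_sum (fun i _ => hη' i) j).trans
    (Finset.sum_congr rfl fun i _ => pdv_comm (contDiffAt_pi.1 hη i) i j)

theorem divf_advf (hη : ContDiffAt ℝ 2 η x) :
    divf (advf η) x = (jac η x * jac η x).trace + η x ⬝ᵥ grad (divf η) x := by
  have hd (j : Fin N) : DifferentiableAt ℝ (fun z => η z j) x :=
    (contDiffAt_pi.1 hη j).differentiableAt two_ne_zero
  have hd' (i j : Fin N) : DifferentiableAt ℝ (pdv (fun z => η z i) j) x :=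
    (contDiffAt_pdv (m := 1) (contDiffAt_pi.1 hη i) one_add_one_eq_two.le j).differentiableAt
      one_ne_zero
  have hpdv (i : Fin N) : pdv (fun z => advf η z i) i x =
      ∑ j, (η x j * pdv (pdv (fun z => η z i) j) i x
        + pdv (fun z => η z i) j x * pdv (fun z => η z j) i x) :=
    (pdv_sum (fun j _ => (hd j).mul (hd' i j)) i).trans
      (Finset.sum_congr rfl fun j _ => pdv_mul (hd j) (hd' i j) i)
  have hgrad : ∑ i, ∑ j, η x j * pdv (pdv (fun z => η z i) j) i x = η x ⬝ᵥ grad (divf η) x := by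
    rw [Finset.sum_comm]
    simp only [dotProduct, grad, pdv_divf hη, Finset.mul_sum]
  rw [divf, Finset.sum_congr rfl fun i _ => hpdv i]
  simp only [Finset.sum_add_distrib, hgrad]
  exact add_comm _ _

theorem divf_volAccel (hη : ContDiffAt ℝ 2 η x) :
    divf (volAccel η) x = (jac η x * jac η x).trace - divf η x ^ 2 := by
  have hdiv : DifferentiableAt ℝ (divf η) x :=
    (contDiffAt_divf (m := 1) hη one_add_one_eq_two.le).differentiableAt one_ne_zero
  have hadv : DifferentiableAt ℝ (advf η) x :=
    (contDiffAt_advf (m := 1) hη one_add_one_eq_two.le).differentiableAt one_ne_zero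
  have hd : DifferentiableAt ℝ η x := hη.differentiableAt two_ne_zero
  have hmul : DifferentiableAt ℝ (fun z i => divf η z * η z i) x :=
    differentiableAt_pi.2 fun i => hdiv.mul (differentiableAt_pi.1 hd i)
  unfold volAccel
  rw [divf_sub hadv hmul, divf_mul hdiv hd, divf_advf hη]
  ring

theorem continuous_jac (hη : ContDiff ℝ 1 η) : Continuous (jac η) :=
  continuous_matrix fun i j => continuous_iff_continuousAt.2 fun _ =>
    (contDiffAt_pdv (m := 0) (contDiff_pi.1 hη i).contDiffAt (zero_add 1).le j).continuousAt

theorem defMat_eq (η W : (Fin N → ℝ) → (Fin N → ℝ)) (t : ℝ) (x : Fin N → ℝ) :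
    defMat η W t x = 1 + t • jac η x + t ^ 2 • (2⁻¹ : ℝ) • jac W x := by
  ext i j
  simp only [defMat, jac, Matrix.of_apply, Matrix.add_apply, Matrix.smul_apply, Matrix.one_apply,
    smul_eq_mul]
  ring

end VectorField

section Volume

variable {N : ℕ} {η W : (Fin N → ℝ) → (Fin N → ℝ)} {E : Set (Fin N → ℝ)}
  {μ : Measure (Fin N → ℝ)}

theorem setIntegral_det_defMat_zero :
    ∫ x in E, (defMat η W 0 x).det ∂μ = μ.real E := by
  simp [defMat_eq]

theorem exists_hasDerivAt_setIntegral_det_defMat [IsFiniteMeasureOnCompacts μ]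
    (hE : Bornology.IsBounded E) (hη : ContDiff ℝ 1 η) (hW : ContDiff ℝ 1 W) :
    ∃ V' : ℝ → ℝ,
      (∀ t, HasDerivAt (fun s : ℝ => ∫ x in E, (defMat η W s x).det ∂μ) (V' t) t) ∧
      V' 0 = ∫ x in E, divf η x ∂μ ∧
      HasDerivAt V'
        (∫ x in E, (divf W x + divf η x ^ 2 - (jac η x * jac η x).trace) ∂μ) 0 := by
  let A : Matrix (Fin N) (Fin N) C(Fin N → ℝ, ℝ) :=
    Matrix.of fun i j => ⟨fun x => jac η x i j, (continuous_jac hη).matrix_elem i j⟩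
  let B : Matrix (Fin N) (Fin N) C(Fin N → ℝ, ℝ) :=
    Matrix.of fun i j => ⟨fun x => 2⁻¹ * jac W x i j,
      ((continuous_jac hW).matrix_elem i j).const_mul _⟩
  have hdef (t : ℝ) (x : Fin N → ℝ) :
      defMat η W t x = 1 + t • A.map (· x) + t ^ 2 • B.map (· x) := defMat_eq η W t x
  have hA (x : Fin N → ℝ) : A.trace x = divf η x := by simp [A, Matrix.trace, divf, jac]
  have hAA (x : Fin N → ℝ) : (A * A).trace x = (jac η x * jac η x).trace := by
    simp [A, Matrix.trace, Matrix.mul_apply]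
  have hB (x : Fin N → ℝ) : 2 * B.trace x = divf W x := by
    simp [B, Matrix.trace, divf, jac, ← Finset.mul_sum]
  obtain ⟨V', hV, hV0, hV'⟩ := exists_hasDerivAt_setIntegral_det (μ := μ) hE A B
  refine ⟨V', by simpa only [hdef] using hV, by simpa only [hA] using hV0, ?_⟩
  simpa [hA, hAA, hB] using hV'

theorem volume_preserving_to_second_order_general [IsFiniteMeasureOnCompacts μ]
    (hE : Bornology.IsBounded E) (hη : ContDiff ℝ 2 η) :
    (∫ x in E, (defMat η (volAccel η) 0 x).det ∂μ) = μ.real E ∧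
    ∃ V' : ℝ → ℝ,
      (∀ t, HasDerivAt (fun s : ℝ => ∫ x in E, (defMat η (volAccel η) s x).det ∂μ) (V' t) t) ∧
      V' 0 = (∫ x in E, divf η x ∂μ) ∧
      HasDerivAt V' 0 0 := by
  have hW : ContDiff ℝ 1 (volAccel η) := contDiff_iff_contDiffAt.2 fun _ =>
    contDiffAt_volAccel hη.contDiffAt one_add_one_eq_two.le
  obtain ⟨V', hV, hV0, hV'⟩ :=
    exists_hasDerivAt_setIntegral_det_defMat (μ := μ) hE (hη.of_le one_le_two) hW
  refine ⟨setIntegral_det_defMat_zero, V', hV, hV0, ?_⟩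
  simpa [divf_volAccel hη.contDiffAt] using hV'

end Volume

/-- Volume preservation to second order: with
`W := (η·∇)η − (div η)·η` and `Φ_t := id + tη + (t²/2)W`, the function
`V(t) := ∫_E det ∇Φ_t` is twice differentiable at `t = 0` with `V(0) = |E|`,
`V'(0) = ∫_E div η` and `V''(0) = 0`. -/
theorem volume_preserving_to_second_order
    (N : ℕ) (E : Set (Fin N → ℝ)) (hEm : MeasurableSet E) (hEb : Bornology.IsBounded E)
    (η : (Fin N → ℝ) → (Fin N → ℝ))
    (hη : ContDiff ℝ 3 η) (hηb : BddUpTo 3 η) :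
    (∫ x in E,
        (defMat η
          (fun z => fun i => advf η z i - (∑ c, pdv (fun w => η w c) c z) * η z i)
          0 x).det) = (volume E).toReal ∧
    ∃ V' : ℝ → ℝ,
      (∀ᶠ t in 𝓝 (0 : ℝ),
        HasDerivAt
          (fun s : ℝ => ∫ x in E,
            (defMat η
              (fun z => fun i => advf η z i - (∑ c, pdv (fun w => η w c) c z) * η z i)
              s x).det)
          (V' t) t) ∧
      V' 0 = (∫ x in E, ∑ i, pdv (fun z => η z i) i x) ∧
      HasDerivAt V' 0 0 := by
  obtain ⟨h0, V', hV, hV'⟩ := volume_preserving_to_second_order_general (μ := volume) hEb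
    (hη.of_le (by norm_num))
  exact ⟨h0, V', .of_forall hV, hV'⟩

end PaperAC
end
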